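/- arXiv:1910.11891 — 2 statements merged into one kernel-verified Lean document; each statement's English description precedes it below -/
import Mathlib

section
/- Every simple graph of order at most 11 with minimum degree at least 6 contains a K_6 minor. -/
attribute [local instance] Classical.propDecidable

/-- `G` contains a `K_t` minor: `t` pairwise disjoint nonempty branch sets, each inducing a
connected subgraph of `G`, with an edge of `G` between any two of them. -/
def SimpleGraph.HasCompleteMinor {V : Type*} (G : SimpleGraph V) (t : ℕ) : Prop :=
  ∃ B : Fin t → Set V,
    (∀ i, (B i).Nonempty) ∧
    (∀ i, (G.induce (B i)).Connected) ∧
    (∀ i j, i ≠ j → Disjoint (B i) (B j)) ∧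
    (∀ i j, i ≠ j → ∃ u ∈ B i, ∃ v ∈ B j, G.Adj u v)


namespace K6

variable {V : Type*} 

lemma conn_singleton (G : SimpleGraph V) (a : V) : (G.induce ({a} : Set V)).Connected := by
  have : Nonempty ({a} : Set V) := ⟨⟨a, rfl⟩⟩
  have : Subsingleton ({a} : Set V) := by
    constructor
    rintro ⟨x, hx⟩ ⟨y, hy⟩
    rw [Set.mem_singleton_iff] at hx hy
    subst hx
    subst hy
    rfl
  exact ⟨fun x y => by rw [Subsingleton.elim x y]⟩

lemma conn_insert (G : SimpleGraph V) (S : Set V) (a b : V) (hS : (G.induce S).Connected)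
    (hb : b ∈ S) (hab : G.Adj a b) : (G.induce (insert a S)).Connected := by
  have hle : S ⊆ insert a S := Set.subset_insert a S
  have key : ∀ z : (insert a S : Set V), (G.induce (insert a S)).Reachable ⟨b, hle hb⟩ z := by
    rintro ⟨z, hz⟩
    rcases hz with rfl | hz
    · apply SimpleGraph.Adj.reachable
      exact hab.symm
    · have := hS.preconnected ⟨b, hb⟩ ⟨z, hz⟩
      exact this.map (SimpleGraph.induceHomOfLE G hle).toHom
  have : Nonempty (insert a S : Set V) := ⟨⟨b, hle hb⟩⟩
  exact ⟨fun x y => (key x).symm.trans (key y)⟩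

/-- a point attached to a set that is a clique -/
lemma conn_clique (G : SimpleGraph V) (p : V) (A : Set V)
    (hA : ∀ x ∈ A, ∀ y ∈ A, x ≠ y → G.Adj x y) (hp : ∃ x ∈ A, G.Adj p x) :
    (G.induce (insert p A)).Connected := by
  obtain ⟨b, hb, hpb⟩ := hp
  have key : ∀ z : (insert p A : Set V), (G.induce (insert p A)).Reachable ⟨b, Or.inr hb⟩ z := by
    rintro ⟨z, hz⟩
    rcases hz with rfl | hz
    · exact SimpleGraph.Adj.reachable hpb.symm
    · by_cases h : b = z
      · subst h; exact SimpleGraph.Reachable.refl _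
      · exact SimpleGraph.Adj.reachable (hA b hb z hz h)
  have : Nonempty (insert p A : Set V) := ⟨⟨b, Or.inr hb⟩⟩
  exact ⟨fun x y => (key x).symm.trans (key y)⟩

lemma minor_of (G : SimpleGraph V) (B : Fin 6 → Set V)
    (hc : ∀ i, (G.induce (B i)).Connected)
    (hd : ∀ i j, i < j → ∀ x ∈ B i, x ∉ B j)
    (ha : ∀ i j, i < j → ∃ u ∈ B i, ∃ v ∈ B j, G.Adj u v) : G.HasCompleteMinor 6 := by
  refine ⟨B, ?_, hc, ?_, ?_⟩
  · intro i
    obtain ⟨⟨x, hx⟩⟩ := (hc i).nonempty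
    exact ⟨x, hx⟩
  · intro i j hij
    rw [Set.disjoint_left]
    rcases lt_or_gt_of_ne hij with h | h
    · exact hd i j h
    · exact fun x hx hx' => hd j i h x hx' hx
  · intro i j hij
    rcases lt_or_gt_of_ne hij with h | h
    · exact ha i j h
    · obtain ⟨u, hu, v, hv, huv⟩ := ha j i h
      exact ⟨v, hv, u, hu, huv.symm⟩

lemma lt6 (P : Fin 6 → Fin 6 → Prop) (h01 : P 0 1) (h02 : P 0 2) (h03 : P 0 3) (h04 : P 0 4)
    (h05 : P 0 5) (h12 : P 1 2) (h13 : P 1 3) (h14 : P 1 4) (h15 : P 1 5) (h23 : P 2 3)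
    (h24 : P 2 4) (h25 : P 2 5) (h34 : P 3 4) (h35 : P 3 5) (h45 : P 4 5) :
    ∀ i j, i < j → P i j := by
  intro i j hij
  fin_cases i <;> fin_cases j <;> first | assumption | (exfalso; revert hij; simp)

lemma minor6 (G : SimpleGraph V) (A B C D E F : Set V)
    (cA : (G.induce A).Connected) (cB : (G.induce B).Connected) (cC : (G.induce C).Connected)
    (cD : (G.induce D).Connected) (cE : (G.induce E).Connected) (cF : (G.induce F).Connected)
    (dAB : ∀ x ∈ A, x ∉ B) (dAC : ∀ x ∈ A, x ∉ C) (dAD : ∀ x ∈ A, x ∉ D) (dAE : ∀ x ∈ A, x ∉ E)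
    (dAF : ∀ x ∈ A, x ∉ F) (dBC : ∀ x ∈ B, x ∉ C) (dBD : ∀ x ∈ B, x ∉ D) (dBE : ∀ x ∈ B, x ∉ E)
    (dBF : ∀ x ∈ B, x ∉ F) (dCD : ∀ x ∈ C, x ∉ D) (dCE : ∀ x ∈ C, x ∉ E) (dCF : ∀ x ∈ C, x ∉ F)
    (dDE : ∀ x ∈ D, x ∉ E) (dDF : ∀ x ∈ D, x ∉ F) (dEF : ∀ x ∈ E, x ∉ F)
    (aAB : ∃ u ∈ A, ∃ v ∈ B, G.Adj u v) (aAC : ∃ u ∈ A, ∃ v ∈ C, G.Adj u v)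
    (aAD : ∃ u ∈ A, ∃ v ∈ D, G.Adj u v) (aAE : ∃ u ∈ A, ∃ v ∈ E, G.Adj u v)
    (aAF : ∃ u ∈ A, ∃ v ∈ F, G.Adj u v) (aBC : ∃ u ∈ B, ∃ v ∈ C, G.Adj u v)
    (aBD : ∃ u ∈ B, ∃ v ∈ D, G.Adj u v) (aBE : ∃ u ∈ B, ∃ v ∈ E, G.Adj u v)
    (aBF : ∃ u ∈ B, ∃ v ∈ F, G.Adj u v) (aCD : ∃ u ∈ C, ∃ v ∈ D, G.Adj u v)
    (aCE : ∃ u ∈ C, ∃ v ∈ E, G.Adj u v) (aCF : ∃ u ∈ C, ∃ v ∈ F, G.Adj u v)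
    (aDE : ∃ u ∈ D, ∃ v ∈ E, G.Adj u v) (aDF : ∃ u ∈ D, ∃ v ∈ F, G.Adj u v)
    (aEF : ∃ u ∈ E, ∃ v ∈ F, G.Adj u v) : G.HasCompleteMinor 6 := by
  refine minor_of G ![A, B, C, D, E, F] ?_ ?_ ?_
  · intro i
    fin_cases i
    exacts [cA, cB, cC, cD, cE, cF]
  · exact lt6 (fun i j => ∀ x ∈ (![A, B, C, D, E, F] : Fin 6 → Set V) i,
      x ∉ (![A, B, C, D, E, F] : Fin 6 → Set V) j)
      dAB dAC dAD dAE dAF dBC dBD dBE dBF dCD dCE dCF dDE dDF dEF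
  · exact lt6 (fun i j => ∃ u ∈ (![A, B, C, D, E, F] : Fin 6 → Set V) i,
      ∃ v ∈ (![A, B, C, D, E, F] : Fin 6 → Set V) j, G.Adj u v)
      aAB aAC aAD aAE aAF aBC aBD aBE aBF aCD aCE aCF aDE aDF aEF

lemma minor_mono {G H : SimpleGraph V} (h : G ≤ H) (hG : G.HasCompleteMinor 6) :
    H.HasCompleteMinor 6 := by
  obtain ⟨B, h1, h2, h3, h4⟩ := hG
  refine ⟨B, h1, fun i => (h2 i).mono ?_, h3, ?_⟩
  · intro x y hxy
    exact h hxy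
  · intro i j hij
    obtain ⟨u, hu, v, hv, huv⟩ := h4 i j hij
    exact ⟨u, hu, v, hv, h huv⟩

/-- contraction of `y` into `x` (the vertex `y` becomes isolated) -/
def con (G : SimpleGraph V) (x y : V) : SimpleGraph V where
  Adj u v := u ≠ v ∧ u ≠ y ∧ v ≠ y ∧ (G.Adj u v ∨ (u = x ∧ G.Adj y v) ∨ (v = x ∧ G.Adj u y))
  symm := by
    constructor
    rintro u v ⟨h1, h2, h3, h4⟩
    refine ⟨h1.symm, h3, h2, ?_⟩
    rcases h4 with h | ⟨h, h'⟩ | ⟨h, h'⟩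
    · exact Or.inl h.symm
    · exact Or.inr (Or.inr ⟨h, h'.symm⟩)
    · exact Or.inr (Or.inl ⟨h, h'.symm⟩)
  loopless := by
    constructor
    rintro u ⟨h, _⟩
    exact h rfl

lemma minor_con {G : SimpleGraph V} {x y : V} (hxy : G.Adj x y)
    (h : (con G x y).HasCompleteMinor 6) : G.HasCompleteMinor 6 := by
  obtain ⟨B, h1, h2, h3, h4⟩ := h
  let f : V → V := fun u => if u = y then x else u
  have fy : f y = x := by simp [f]
  have fn : ∀ u, u ≠ y → f u = u := fun u hu => by simp [f, hu]
  have lift : ∀ i j, i ≠ j → ∃ u v, f u ∈ B i ∧ f v ∈ B j ∧ G.Adj u v := by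
    intro i j hij
    obtain ⟨u, hu, v, hv, -, huy, hvy, hadj⟩ := h4 i j hij
    rcases hadj with h | ⟨h, h'⟩ | ⟨h, h'⟩
    · exact ⟨u, v, by rwa [fn u huy], by rwa [fn v hvy], h⟩
    · exact ⟨y, v, by rwa [fy, ← h], by rwa [fn v hvy], h'⟩
    · exact ⟨u, y, by rwa [fn u huy], by rwa [fy, ← h], h'⟩
  have ne : ∀ i, ∃ u, f u ∈ B i := by
    intro i
    obtain ⟨j, hj⟩ : ∃ j : Fin 6, i ≠ j := by
      by_cases h : i = 0
      · exact ⟨1, by subst h; simp⟩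
      · exact ⟨0, h⟩
    obtain ⟨u, v, hu, -⟩ := lift i j hj
    exact ⟨u, hu⟩
  refine ⟨fun i => {u | f u ∈ B i}, ne, ?_, ?_, ?_⟩
  · intro i
    obtain ⟨u0, hu0⟩ := ne i
    have : Nonempty ({u | f u ∈ B i} : Set V) := ⟨⟨u0, hu0⟩⟩
    have adjr : ∀ (a b : V) (ha : f a ∈ B i) (hb : f b ∈ B i), G.Adj a b →
        (G.induce {u | f u ∈ B i}).Reachable ⟨a, ha⟩ ⟨b, hb⟩ := by
      intro a b ha hb hab
      exact SimpleGraph.Adj.reachable hab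
    have same : ∀ (a b : V) (ha : f a ∈ B i) (hb : f b ∈ B i), f a = f b →
        (G.induce {u | f u ∈ B i}).Reachable ⟨a, ha⟩ ⟨b, hb⟩ := by
      intro a b ha hb hab
      by_cases hay : a = y
      · by_cases hby : b = y
        · subst hay; subst hby; exact SimpleGraph.Reachable.refl _
        · have : b = x := by rw [← fn b hby, ← hab, hay, fy]
          subst this; subst hay
          exact adjr _ _ _ _ hxy.symm
      · by_cases hby : b = y
        · have : a = x := by rw [← fn a hay, hab, hby, fy]
          subst this; subst hby
          exact adjr _ _ _ _ hxy
        · have : a = b := by rw [← fn a hay, hab, fn b hby]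
          subst this; exact SimpleGraph.Reachable.refl _
    have step : ∀ p q : B i, ((con G x y).induce (B i)).Walk p q → ∀ (a b : V) (ha : f a ∈ B i)
        (hb : f b ∈ B i), f a = p → f b = q →
        (G.induce {u | f u ∈ B i}).Reachable ⟨a, ha⟩ ⟨b, hb⟩ := by
      intro p q w
      induction w with
      | nil => intro a b ha hb h h'; exact same a b ha hb (h.trans h'.symm)
      | @cons p r q hadj w ih =>
        intro a b ha hb h h'
        obtain ⟨-, hpy, hry, hadj⟩ := hadj
        have hp' : f p = p := fn _ hpy
        have hr' : f r = r := fn _ hry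
        have hpB : f p ∈ B i := by rw [hp']; exact p.2
        have hrB : f r ∈ B i := by rw [hr']; exact r.2
        have s1 := same a p ha hpB (h.trans hp'.symm)
        have s2 := ih r b hrB hb hr' h'
        refine s1.trans (SimpleGraph.Reachable.trans ?_ s2)
        rcases hadj with hh | ⟨hh, hh'⟩ | ⟨hh, hh'⟩
        · exact adjr _ _ hpB hrB hh
        · have hyB : f y ∈ B i := by rw [fy, ← hh]; exact p.2
          exact (same _ y hpB hyB (by rw [hp', fy]; exact hh)).trans (adjr _ _ hyB hrB hh')
        · have hyB : f y ∈ B i := by rw [fy, ← hh]; exact r.2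
          exact (adjr _ _ hpB hyB hh').trans (same y _ hyB hrB (by rw [hr', fy]; exact hh.symm))
    refine ⟨?_⟩
    rintro ⟨a, ha⟩ ⟨b, hb⟩
    obtain ⟨w⟩ := (h2 i).preconnected ⟨f a, ha⟩ ⟨f b, hb⟩
    exact step _ _ w a b ha hb rfl rfl
  · intro i j hij
    rw [Set.disjoint_left]
    intro u hu hu'
    exact Set.disjoint_left.mp (h3 i j hij) hu hu'
  · intro i j hij
    obtain ⟨u, v, hu, hv, huv⟩ := lift i j hij
    exact ⟨u, hu, v, hv, huv⟩


section counting

set_option linter.unusedSectionVars false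

variable [Fintype V]

/-- neighbour set -/
noncomputable def nb (G : SimpleGraph V) (v : V) : Finset V := Finset.univ.filter (fun u => G.Adj v u)

lemma mem_nb {G : SimpleGraph V} {u v : V} : u ∈ nb G v ↔ G.Adj v u := by simp [nb]

/-- degree -/
noncomputable def dg (G : SimpleGraph V) (v : V) : ℕ := (nb G v).card

/-- number of common neighbours -/
noncomputable def cn (G : SimpleGraph V) (u v : V) : ℕ := (nb G u ∩ nb G v).card

lemma dg_eq_degree (G : SimpleGraph V) (v : V) : dg G v = G.degree v := by
  unfold dg nb
  rw [← SimpleGraph.card_neighborFinset_eq_degree]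
  congr 1
  ext u
  simp

lemma even_sum (G : SimpleGraph V) : Even (∑ v, dg G v) := by
  have := G.sum_degrees_eq_twice_card_edges
  simp_rw [dg_eq_degree]
  rw [this]
  exact even_two_mul _

lemma nb_con_self (G : SimpleGraph V) {x y : V} (hxy : G.Adj x y) :
    nb (con G x y) x = ((nb G x ∪ nb G y).erase x).erase y := by
  ext z
  have := hxy.ne
  simp only [mem_nb, con, Finset.mem_erase, Finset.mem_union]
  grind [SimpleGraph.Adj.symm]

lemma nb_con_y (G : SimpleGraph V) (x y : V) : nb (con G x y) y = ∅ := by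
  ext z
  simp [mem_nb, con]

lemma nb_con_of_not (G : SimpleGraph V) {x y z : V} (hzx : z ≠ x) (hzy : z ≠ y)
    (h : ¬ G.Adj y z) : nb (con G x y) z = nb G z := by
  ext u
  have := G.adj_comm y z
  have := @SimpleGraph.Adj.ne _ G z u
  simp only [mem_nb, con]
  grind

lemma nb_con_of (G : SimpleGraph V) {x y z : V} (hxy : x ≠ y) (hzx : z ≠ x) (hzy : z ≠ y)
    (h : G.Adj y z) : nb (con G x y) z = insert x ((nb G z).erase y) := by
  ext u
  have := G.adj_comm y z
  have := @SimpleGraph.Adj.ne _ G z u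
  simp only [mem_nb, con, Finset.mem_insert, Finset.mem_erase]
  have := @SimpleGraph.Adj.ne _ G y z
  grind

lemma dg_con_self (G : SimpleGraph V) {x y : V} (hxy : G.Adj x y) (hne : x ≠ y) :
    dg (con G x y) x + cn G x y + 2 = dg G x + dg G y := by
  have h1 : y ∈ (nb G x ∪ nb G y).erase x := by simp [mem_nb, hxy, hne.symm]
  have h2 : x ∈ nb G x ∪ nb G y := by simp [mem_nb, hxy.symm]
  have h3 := Finset.card_erase_add_one h1
  have h4 := Finset.card_erase_add_one h2
  have h5 := Finset.card_union_add_card_inter (nb G x) (nb G y)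
  unfold dg cn
  rw [nb_con_self G hxy]
  omega

lemma dg_con_common (G : SimpleGraph V) {x y z : V} (hx : G.Adj x z) (hy : G.Adj y z)
    (hxy : x ≠ y) : dg (con G x y) z + 1 = dg G z := by
  unfold dg
  rw [nb_con_of G hxy hx.ne' hy.ne' hy]
  have h1 : x ∈ (nb G z).erase y := by simp [mem_nb, hx.symm, hxy]
  rw [Finset.insert_eq_of_mem h1]
  exact Finset.card_erase_add_one (by simp [mem_nb, hy.symm])

lemma dg_con_not (G : SimpleGraph V) {x y z : V} (hxy : x ≠ y) (hzx : z ≠ x) (hzy : z ≠ y)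
    (h : ¬ (G.Adj x z ∧ G.Adj y z)) : dg (con G x y) z = dg G z := by
  unfold dg
  by_cases hy : G.Adj y z
  · rw [nb_con_of G hxy hzx hzy hy]
    have hx : ¬ G.Adj x z := fun hx => h ⟨hx, hy⟩
    have h1 : x ∉ (nb G z).erase y := by
      simp only [mem_nb, Finset.mem_erase, not_and]
      intro _ h
      exact hx h.symm
    rw [Finset.card_insert_of_notMem h1]
    exact Finset.card_erase_add_one (by simp [mem_nb, hy.symm])
  · rw [nb_con_of_not G hzx hzy hy]

lemma dg_con_le (G : SimpleGraph V) {x y z : V} (hzx : z ≠ x) (hxy : x ≠ y) :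
    dg (con G x y) z ≤ dg G z := by
  by_cases hzy : z = y
  · subst hzy
    unfold dg
    rw [nb_con_y]
    simp
  · by_cases h : G.Adj x z ∧ G.Adj y z
    · have := dg_con_common G h.1 h.2 hxy
      omega
    · exact (dg_con_not G hxy hzx hzy h).le

lemma sum_con (G : SimpleGraph V) {x y : V} (hxy : G.Adj x y) :
    ∑ v, dg (con G x y) v + 2 * cn G x y + 2 = ∑ v, dg G v := by
  have hne := hxy.ne
  have e : ∀ f : V → ℕ, ∑ v, f v = f x + f y + ∑ v ∈ (Finset.univ.erase x).erase y, f v := by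
    intro f
    rw [← Finset.add_sum_erase Finset.univ f (Finset.mem_univ x),
      ← Finset.add_sum_erase (Finset.univ.erase x) f (a := y) (by simp [hne.symm])]
    ring
  rw [e, e (dg G)]
  have h1 := dg_con_self G hxy hne
  have h2 : dg (con G x y) y = 0 := by unfold dg; rw [nb_con_y]; simp
  have h3 : ∑ v ∈ (Finset.univ.erase x).erase y, dg G v =
      ∑ v ∈ (Finset.univ.erase x).erase y, dg (con G x y) v + cn G x y := by
    have : cn G x y = ∑ v ∈ (Finset.univ.erase x).erase y,
        if v ∈ nb G x ∩ nb G y then 1 else 0 := by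
      rw [Finset.sum_ite_mem, Finset.sum_const, smul_eq_mul, mul_one]
      unfold cn
      congr 1
      ext z
      simp only [Finset.mem_inter, mem_nb, Finset.mem_erase, Finset.mem_univ, and_true]
      constructor
      · rintro ⟨h, h'⟩
        exact ⟨⟨h'.ne', h.ne'⟩, h, h'⟩
      · exact fun h => h.2
    rw [this, ← Finset.sum_add_distrib]
    apply Finset.sum_congr rfl
    intro z hz
    simp only [Finset.mem_erase, Finset.mem_univ, and_true] at hz
    simp only [Finset.mem_inter, mem_nb]
    split_ifs with h
    · exact (dg_con_common G h.1 h.2 hne).symm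
    · rw [dg_con_not G hne hz.2 hz.1 h, add_zero]
  omega

lemma del_edge (G : SimpleGraph V) {x y : V} (hxy : G.Adj x y) :
    ∃ G' : SimpleGraph V, G' ≤ G ∧ dg G' x + 1 = dg G x ∧ dg G' y + 1 = dg G y ∧
      (∀ z, z ≠ x → z ≠ y → dg G' z = dg G z) ∧ ∑ v, dg G' v + 2 = ∑ v, dg G v := by
  have hne := hxy.ne
  refine ⟨G.deleteEdges {s(x, y)}, SimpleGraph.deleteEdges_le _, ?_⟩
  have hx : nb (G.deleteEdges {s(x, y)}) x = (nb G x).erase y := by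
    ext z; simp [mem_nb]; grind
  have hy : nb (G.deleteEdges {s(x, y)}) y = (nb G y).erase x := by
    ext z; simp [mem_nb]; grind
  have hz : ∀ z, z ≠ x → z ≠ y → nb (G.deleteEdges {s(x, y)}) z = nb G z := by
    intro z h1 h2
    ext u; simp [mem_nb]; grind
  have dx : dg (G.deleteEdges {s(x, y)}) x + 1 = dg G x := by
    unfold dg; rw [hx]; exact Finset.card_erase_add_one (by simp [mem_nb, hxy])
  have dy : dg (G.deleteEdges {s(x, y)}) y + 1 = dg G y := by
    unfold dg; rw [hy]; exact Finset.card_erase_add_one (by simp [mem_nb, hxy.symm])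
  have dz : ∀ z, z ≠ x → z ≠ y → dg (G.deleteEdges {s(x, y)}) z = dg G z := by
    intro z h1 h2
    unfold dg; rw [hz z h1 h2]
  refine ⟨dx, dy, dz, ?_⟩
  have e : ∀ f : V → ℕ, ∑ v, f v = f x + f y + ∑ v ∈ (Finset.univ.erase x).erase y, f v := by
    intro f
    rw [← Finset.add_sum_erase Finset.univ f (Finset.mem_univ x),
      ← Finset.add_sum_erase (Finset.univ.erase x) f (a := y) (by simp [hne.symm])]
    ring
  rw [e, e (dg G)]
  have : ∑ v ∈ (Finset.univ.erase x).erase y, dg (G.deleteEdges {s(x, y)}) v =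
      ∑ v ∈ (Finset.univ.erase x).erase y, dg G v := by
    apply Finset.sum_congr rfl
    intro z hz
    simp only [Finset.mem_erase, Finset.mem_univ, and_true] at hz
    exact dz z hz.2 hz.1
  omega

lemma double_count (G : SimpleGraph V) (A B : Finset V) :
    ∑ a ∈ A, (nb G a ∩ B).card = ∑ b ∈ B, (nb G b ∩ A).card := by
  have h : ∀ (C : Finset V) (a : V), (nb G a ∩ C).card = ∑ b ∈ C, if G.Adj a b then 1 else 0 := by
    intro C a
    rw [← Finset.card_filter]
    congr 1
    ext z
    simp only [Finset.mem_inter, mem_nb, Finset.mem_filter]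
    tauto
  simp_rw [h]
  rw [Finset.sum_comm]
  simp_rw [G.adj_comm]

/-- splitting the degree along `v`, `N(v)`, and the rest `M` of the support -/
lemma split_N {G : SimpleGraph V} {S : Finset V} (hS : ∀ u v, G.Adj u v → v ∈ S) {v u : V}
    (hu : G.Adj v u) :
    dg G u = 1 + (nb G u ∩ nb G v).card + (nb G u ∩ (S \ insert v (nb G v))).card := by
  have h : nb G u = insert v ((nb G u ∩ nb G v) ∪ (nb G u ∩ (S \ insert v (nb G v)))) := by
    ext z
    have := hS u z
    have := hu.symm
    simp only [Finset.mem_insert, Finset.mem_union, Finset.mem_inter, mem_nb, Finset.mem_sdiff]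
    grind
  have h1 : v ∉ (nb G u ∩ nb G v) ∪ (nb G u ∩ (S \ insert v (nb G v))) := by
    simp [mem_nb]
  have h2 : Disjoint (nb G u ∩ nb G v) (nb G u ∩ (S \ insert v (nb G v))) := by
    rw [Finset.disjoint_left]
    intro z
    simp [mem_nb]
    tauto
  unfold dg
  conv_lhs => rw [h]
  rw [Finset.card_insert_of_notMem h1, Finset.card_union_of_disjoint h2]
  omega

lemma split_M {G : SimpleGraph V} {S : Finset V} (hS : ∀ u v, G.Adj u v → v ∈ S) {v m : V}
    (hm : ¬ G.Adj v m) :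
    dg G m = (nb G m ∩ nb G v).card + (nb G m ∩ (S \ insert v (nb G v))).card := by
  have h : nb G m = (nb G m ∩ nb G v) ∪ (nb G m ∩ (S \ insert v (nb G v))) := by
    ext z
    have := hS m z
    have := G.adj_comm v m
    simp only [Finset.mem_insert, Finset.mem_union, Finset.mem_inter, mem_nb, Finset.mem_sdiff]
    grind
  have h2 : Disjoint (nb G m ∩ nb G v) (nb G m ∩ (S \ insert v (nb G v))) := by
    rw [Finset.disjoint_left]
    intro z
    simp [mem_nb]
    tauto
  unfold dg
  conv_lhs => rw [h]
  rw [Finset.card_union_of_disjoint h2]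

lemma card_M {G : SimpleGraph V} {S : Finset V} (hS : ∀ u v, G.Adj u v → v ∈ S) {v : V}
    (hv : v ∈ S) : (S \ insert v (nb G v)).card + dg G v + 1 = S.card := by
  have h : insert v (nb G v) ⊆ S := by
    intro z hz
    rw [Finset.mem_insert, mem_nb] at hz
    rcases hz with rfl | hz
    · exact hv
    · exact hS _ _ hz
  have h1 := Finset.card_sdiff_add_card_eq_card h
  rw [Finset.card_insert_of_notMem (by simp [mem_nb])] at h1
  unfold dg
  omega

lemma sum_split {G : SimpleGraph V} {S : Finset V} (hS : ∀ u v, G.Adj u v → v ∈ S) {v : V}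
    (hv : v ∈ S) (f : V → ℕ) : ∑ u ∈ S, f u =
      f v + ∑ u ∈ nb G v, f u + ∑ u ∈ S \ insert v (nb G v), f u := by
  have h : insert v (nb G v) ⊆ S := by
    intro z hz
    rw [Finset.mem_insert, mem_nb] at hz
    rcases hz with rfl | hz
    · exact hv
    · exact hS _ _ hz
  rw [← Finset.sum_sdiff h, Finset.sum_insert (by simp [mem_nb])]
  ring

lemma sum_supp {G : SimpleGraph V} {S : Finset V} (hS : ∀ u v, G.Adj u v → v ∈ S) :
    ∑ u, dg G u = ∑ u ∈ S, dg G u := by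
  symm
  apply Finset.sum_subset (Finset.subset_univ S)
  intro x _ hx
  unfold dg
  rw [Finset.card_eq_zero]
  ext z
  simp only [mem_nb, Finset.notMem_empty, iff_false]
  intro h
  exact hx (hS _ _ h.symm)

lemma inter_M_le (G : SimpleGraph V) (M : Finset V) {m : V} (hm : m ∈ M) :
    (nb G m ∩ M).card + 1 ≤ M.card := by
  rw [← Finset.card_erase_add_one hm]
  have : nb G m ∩ M ⊆ M.erase m := by
    intro z hz
    simp only [Finset.mem_inter, mem_nb, Finset.mem_erase] at hz ⊢
    exact ⟨hz.1.ne', hz.2⟩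
  have := Finset.card_le_card this
  omega

lemma clique_of_card (G : SimpleGraph V) (M : Finset V) {m : V} (hm : m ∈ M)
    (h : M.card ≤ (nb G m ∩ M).card + 1) : ∀ m' ∈ M, m' ≠ m → G.Adj m m' := by
  intro m' hm' hne
  by_contra hadj
  have : nb G m ∩ M ⊆ (M.erase m).erase m' := by
    intro z hz
    simp only [Finset.mem_inter, mem_nb, Finset.mem_erase] at hz ⊢
    refine ⟨?_, hz.1.ne', hz.2⟩
    rintro rfl
    exact hadj hz.1
  have h1 := Finset.card_le_card this
  have h2 := Finset.card_erase_add_one hm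
  have h3 := Finset.card_erase_add_one (show m' ∈ M.erase m by simp [hne, hm'])
  omega

/-- at most one non-neighbour -/
lemma uniq_of_card (G : SimpleGraph V) (M : Finset V) {m : V} (hm : m ∈ M)
    (h : M.card ≤ (nb G m ∩ M).card + 2) : ∀ x ∈ M, ∀ y ∈ M, x ≠ m → y ≠ m → ¬ G.Adj m x →
      ¬ G.Adj m y → x = y := by
  intro x hx y hy hxm hym hax hay
  by_contra hxy
  have : nb G m ∩ M ⊆ ((M.erase m).erase x).erase y := by
    intro z hz
    simp only [Finset.mem_inter, mem_nb, Finset.mem_erase] at hz ⊢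
    refine ⟨?_, ?_, hz.1.ne', hz.2⟩
    · rintro rfl
      exact hay hz.1
    · rintro rfl
      exact hax hz.1
  have h1 := Finset.card_le_card this
  have h2 := Finset.card_erase_add_one hm
  have h3 := Finset.card_erase_add_one (show x ∈ M.erase m by simp [hxm, hx])
  have h4 := Finset.card_erase_add_one (show y ∈ (M.erase m).erase x by
    simp [hym, hy, Ne.symm hxy])
  omega

/-- choose a pair of vertices, all others adjacent to both -/
lemma pick (G : SimpleGraph V) (M : Finset V) (hM : 2 ≤ M.card)
    (U : ∀ m ∈ M, ∀ x ∈ M, ∀ y ∈ M, x ≠ m → y ≠ m → ¬ G.Adj m x → ¬ G.Adj m y → x = y) :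
    ∃ a ∈ M, ∃ b ∈ M, a ≠ b ∧ ((M.erase a).erase b).card + 2 = M.card ∧
      ∀ z ∈ (M.erase a).erase b, G.Adj a z ∧ G.Adj b z := by
  have key : ∃ a ∈ M, ∃ b ∈ M, a ≠ b ∧ ∀ z ∈ M, z ≠ a → z ≠ b → G.Adj a z ∧ G.Adj b z := by
    by_cases h : ∃ a ∈ M, ∃ b ∈ M, a ≠ b ∧ ¬ G.Adj a b
    · obtain ⟨a, ha, b, hb, hab, hadj⟩ := h
      refine ⟨a, ha, b, hb, hab, fun z hz hza hzb => ⟨?_, ?_⟩⟩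
      · by_contra hc
        exact hzb (U a ha z hz b hb hza hab.symm hc hadj)
      · by_contra hc
        exact hza (U b hb z hz a ha hzb hab hc (fun h => hadj h.symm))
    · push Not at h
      obtain ⟨a, ha, b, hb, hab⟩ := Finset.one_lt_card.mp (show 1 < M.card by omega)
      exact ⟨a, ha, b, hb, hab, fun z hz hza hzb => ⟨h a ha z hz hza.symm, h b hb z hz hzb.symm⟩⟩
  obtain ⟨a, ha, b, hb, hab, hz⟩ := key
  refine ⟨a, ha, b, hb, hab, ?_, ?_⟩
  · have h2 := Finset.card_erase_add_one ha
    have h3 := Finset.card_erase_add_one (show b ∈ M.erase a by simp [hab.symm, hb])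
    omega
  · intro z hzm
    simp only [Finset.mem_erase] at hzm
    exact hz z hzm.2.2 hzm.2.1 hzm.1


/-- octahedron plus apex `v`, with `a` and its partner joined through `A` -/
lemma oct (G : SimpleGraph V) (v a a' b b' c c' : V) (A : Set V)
    (hA : ∀ x ∈ A, x ≠ v ∧ x ≠ a ∧ x ≠ a' ∧ x ≠ b ∧ x ≠ b' ∧ x ≠ c ∧ x ≠ c')
    (hconn : (G.induce (insert a A)).Connected)
    (hjoin : ∃ x ∈ insert a A, G.Adj x a')
    (naa : a ≠ a') (nbb : b ≠ b') (ncc : c ≠ c')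
    (va : G.Adj v a) (va' : G.Adj v a') (vb : G.Adj v b) (vb' : G.Adj v b') (vc : G.Adj v c)
    (vc' : G.Adj v c') (ab : G.Adj a b) (ab' : G.Adj a b') (ac : G.Adj a c) (ac' : G.Adj a c')
    (a'b : G.Adj a' b) (a'b' : G.Adj a' b') (a'c : G.Adj a' c) (a'c' : G.Adj a' c')
    (bc : G.Adj b c) (bc' : G.Adj b c') (b'c : G.Adj b' c) (b'c' : G.Adj b' c') :
    G.HasCompleteMinor 6 := by
  have n1 := va.ne
  have n2 := va'.ne
  have n3 := vb.ne
  have n4 := vb'.ne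
  have n5 := vc.ne
  have n6 := vc'.ne
  have n7 := ab.ne
  have n8 := ab'.ne
  have n9 := ac.ne
  have n10 := ac'.ne
  have m1 := a'b.ne
  have m2 := a'b'.ne
  have m3 := a'c.ne
  have m4 := a'c'.ne
  have m5 := bc.ne
  have m6 := bc'.ne
  have m7 := b'c.ne
  have m8 := b'c'.ne
  refine minor6 G {v} (insert a A) {a'} {b} {c} {b', c'} (conn_singleton G v) hconn
    (conn_singleton G a') (conn_singleton G b) (conn_singleton G c)
    (conn_insert G _ b' c' (conn_singleton G c') rfl b'c') ?_ ?_ ?_ ?_ ?_ ?_ ?_ ?_ ?_ ?_ ?_ ?_ ?_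
    ?_ ?_
    ⟨v, rfl, a, Or.inl rfl, va⟩ ⟨v, rfl, a', rfl, va'⟩ ⟨v, rfl, b, rfl, vb⟩ ⟨v, rfl, c, rfl, vc⟩
    ⟨v, rfl, b', Or.inl rfl, vb'⟩ ?_ ⟨a, Or.inl rfl, b, rfl, ab⟩ ⟨a, Or.inl rfl, c, rfl, ac⟩
    ⟨a, Or.inl rfl, b', Or.inl rfl, ab'⟩ ⟨a', rfl, b, rfl, a'b⟩ ⟨a', rfl, c, rfl, a'c⟩
    ⟨a', rfl, b', Or.inl rfl, a'b'⟩ ⟨b, rfl, c, rfl, bc⟩ ⟨b, rfl, c', Or.inr rfl, bc'⟩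
    ⟨c, rfl, b', Or.inl rfl, b'c.symm⟩
  case refine_16 =>
    obtain ⟨x, hx, h⟩ := hjoin
    exact ⟨x, hx, a', rfl, h⟩
  all_goals
    intro x hx hx'
    simp only [Set.mem_insert_iff, Set.mem_singleton_iff] at hx hx'
    grind

/-- clique on six vertices -/
lemma clique6 (G : SimpleGraph V) (v a b c d e : V) (va : G.Adj v a) (vb : G.Adj v b)
    (vc : G.Adj v c) (vd : G.Adj v d) (ve : G.Adj v e) (ab : G.Adj a b) (ac : G.Adj a c)
    (ad : G.Adj a d) (ae : G.Adj a e) (bc : G.Adj b c) (bd : G.Adj b d) (be : G.Adj b e)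
    (cd : G.Adj c d) (ce : G.Adj c e) (de : G.Adj d e) : G.HasCompleteMinor 6 := by
  refine minor6 G {v} {a} {b} {c} {d} {e} (conn_singleton G _) (conn_singleton G _)
    (conn_singleton G _) (conn_singleton G _) (conn_singleton G _) (conn_singleton G _)
    ?_ ?_ ?_ ?_ ?_ ?_ ?_ ?_ ?_ ?_ ?_ ?_ ?_ ?_ ?_
    ⟨_, rfl, _, rfl, va⟩ ⟨_, rfl, _, rfl, vb⟩ ⟨_, rfl, _, rfl, vc⟩ ⟨_, rfl, _, rfl, vd⟩
    ⟨_, rfl, _, rfl, ve⟩ ⟨_, rfl, _, rfl, ab⟩ ⟨_, rfl, _, rfl, ac⟩ ⟨_, rfl, _, rfl, ad⟩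
    ⟨_, rfl, _, rfl, ae⟩ ⟨_, rfl, _, rfl, bc⟩ ⟨_, rfl, _, rfl, bd⟩ ⟨_, rfl, _, rfl, be⟩
    ⟨_, rfl, _, rfl, cd⟩ ⟨_, rfl, _, rfl, ce⟩ ⟨_, rfl, _, rfl, de⟩
  all_goals
    intro x hx hx'
    rw [Set.mem_singleton_iff] at hx hx'
    subst hx
    subst hx'
    first
      | exact va.ne rfl | exact vb.ne rfl | exact vc.ne rfl | exact vd.ne rfl | exact ve.ne rfl
      | exact ab.ne rfl | exact ac.ne rfl | exact ad.ne rfl | exact ae.ne rfl | exact bc.ne rfl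
      | exact bd.ne rfl | exact be.ne rfl | exact cd.ne rfl | exact ce.ne rfl | exact de.ne rfl

/-- labelled octahedron neighbourhood -/
structure Oct (G : SimpleGraph V) (v a a' b b' c c' : V) : Prop where
  naa : a ≠ a'
  nbb : b ≠ b'
  ncc : c ≠ c'
  va : G.Adj v a
  va' : G.Adj v a'
  vb : G.Adj v b
  vb' : G.Adj v b'
  vc : G.Adj v c
  vc' : G.Adj v c'
  ab : G.Adj a b
  ab' : G.Adj a b'
  ac : G.Adj a c
  ac' : G.Adj a c'
  a'b : G.Adj a' b
  a'b' : G.Adj a' b'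
  a'c : G.Adj a' c
  a'c' : G.Adj a' c'
  bc : G.Adj b c
  bc' : G.Adj b c'
  b'c : G.Adj b' c
  b'c' : G.Adj b' c'

lemma Oct.rot {G : SimpleGraph V} {v a a' b b' c c' : V} (h : Oct G v a a' b b' c c') :
    Oct G v b b' c c' a a' := by
  obtain ⟨h1, h2, h3, h4, h5, h6, h7, h8, h9, k1, k2, k3, k4, k5, k6, k7, k8, l1, l2, l3, l4⟩ := h
  exact ⟨h2, h3, h1, h6, h7, h8, h9, h4, h5, l1, l2, k1.symm, k5.symm, l3, l4, k2.symm, k6.symm,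
    k3.symm, k7.symm, k4.symm, k8.symm⟩

lemma Oct.swap {G : SimpleGraph V} {v a a' b b' c c' : V} (h : Oct G v a a' b b' c c') :
    Oct G v a' a b b' c c' := by
  obtain ⟨h1, h2, h3, h4, h5, h6, h7, h8, h9, k1, k2, k3, k4, k5, k6, k7, k8, l1, l2, l3, l4⟩ := h
  exact ⟨h1.symm, h2, h3, h5, h4, h6, h7, h8, h9, k5, k6, k7, k8, k1, k2, k3, k4, l1, l2, l3, l4⟩

lemma Oct.join1 {G : SimpleGraph V} {v a a' b b' c c' w : V} (h : Oct G v a a' b b' c c')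
    (hv : w ≠ v) (hvw : ¬ G.Adj v w) (h1 : G.Adj w a) (h2 : G.Adj w a') :
    G.HasCompleteMinor 6 := by
  obtain ⟨naa, nbb, ncc, va, va', vb, vb', vc, vc', ab, ab', ac, ac', a'b, a'b', a'c, a'c',
    bc, bc', b'c, b'c'⟩ := h
  refine oct G v a a' b b' c c' {w} ?_ (conn_insert G _ a w (conn_singleton G w) rfl h1.symm)
    ⟨w, Or.inr rfl, h2⟩ naa nbb ncc va va' vb vb' vc vc' ab ab' ac ac' a'b a'b' a'c a'c' bc bc'
    b'c b'c'
  intro x hx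
  rw [Set.mem_singleton_iff] at hx
  subst hx
  grind

lemma Oct.join2 {G : SimpleGraph V} {v a a' b b' c c' w w' : V} (h : Oct G v a a' b b' c c')
    (hv : w ≠ v) (hvw : ¬ G.Adj v w) (hv' : w' ≠ v) (hvw' : ¬ G.Adj v w') (hww : G.Adj w w')
    (h1 : G.Adj w a) (h2 : G.Adj w' a') :
    G.HasCompleteMinor 6 := by
  obtain ⟨naa, nbb, ncc, va, va', vb, vb', vc, vc', ab, ab', ac, ac', a'b, a'b', a'c, a'c',
    bc, bc', b'c, b'c'⟩ := h
  refine oct G v a a' b b' c c' {w, w'} ?_ (conn_insert G _ a w (conn_insert G _ w w'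
    (conn_singleton G w') rfl hww) (Or.inl rfl) h1.symm)
    ⟨w', Or.inr (Or.inr rfl), h2⟩ naa nbb ncc va va' vb vb' vc vc' ab ab' ac ac' a'b a'b' a'c a'c'
    bc bc' b'c b'c'
  intro x hx
  rcases hx with hx | hx
  · subst hx; grind
  · rw [Set.mem_singleton_iff] at hx
    subst hx; grind

lemma exists_oct (G : SimpleGraph V) (v : V) (hv : dg G v = 6)
    (ht : ∀ u, G.Adj v u → 4 ≤ cn G u v) : ∃ a a' b b' c c', Oct G v a a' b b' c c' ∧
      ∀ u, G.Adj v u → (u = a ∨ u = a' ∨ u = b ∨ u = b' ∨ u = c ∨ u = c') := by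
  have U : ∀ m ∈ nb G v, ∀ x ∈ nb G v, ∀ y ∈ nb G v, x ≠ m → y ≠ m → ¬ G.Adj m x →
      ¬ G.Adj m y → x = y := by
    intro m hm
    apply uniq_of_card G (nb G v) hm
    have := ht m (mem_nb.mp hm)
    unfold cn at this
    unfold dg at hv
    omega
  unfold dg at hv
  obtain ⟨a, ha, a', ha', naa, cA, hA⟩ := pick G (nb G v) (by omega) U
  have sub : ((nb G v).erase a).erase a' ⊆ nb G v :=
    (Finset.erase_subset _ _).trans (Finset.erase_subset _ _)
  obtain ⟨b, hb, b', hb', nbb, cB, hB⟩ := pick G (((nb G v).erase a).erase a') (by omega)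
    (fun m hm x hx y hy => U m (sub hm) x (sub hx) y (sub hy))
  have sub2 := (Finset.erase_subset b' ((((nb G v).erase a).erase a').erase b)).trans
    (Finset.erase_subset _ _)
  obtain ⟨c, c', ncc, hc⟩ := Finset.card_eq_two.mp
    (show (((((nb G v).erase a).erase a').erase b).erase b').card = 2 by omega)
  have mc : c ∈ ((((nb G v).erase a).erase a').erase b).erase b' := by rw [hc]; simp
  have mc' : c' ∈ ((((nb G v).erase a).erase a').erase b).erase b' := by rw [hc]; simp
  refine ⟨a, a', b, b', c, c', ⟨naa, nbb, ncc, mem_nb.mp ha, mem_nb.mp ha', mem_nb.mp (sub hb),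
    mem_nb.mp (sub hb'), mem_nb.mp (sub (sub2 mc)), mem_nb.mp (sub (sub2 mc')),
    (hA b hb).1, (hA b' hb').1, (hA c (sub2 mc)).1, (hA c' (sub2 mc')).1,
    (hA b hb).2, (hA b' hb').2, (hA c (sub2 mc)).2, (hA c' (sub2 mc')).2,
    (hB c mc).1, (hB c' mc').1, (hB c mc).2, (hB c' mc').2⟩, ?_⟩
  intro u hu
  by_contra hcon
  push Not at hcon
  have : u ∈ ((((nb G v).erase a).erase a').erase b).erase b' := by
    simp [mem_nb, hu, hcon]
  rw [hc] at this
  simp [hcon] at this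

lemma Oct.card {G : SimpleGraph V} {v a a' b b' c c' : V}
    (hN : ∀ u, G.Adj v u → (u = a ∨ u = a' ∨ u = b ∨ u = b' ∨ u = c ∨ u = c')) (w : V) :
    (nb G w ∩ nb G v).card ≤ (if G.Adj w a then 1 else 0) + (if G.Adj w a' then 1 else 0) +
      (if G.Adj w b then 1 else 0) + (if G.Adj w b' then 1 else 0) +
      (if G.Adj w c then 1 else 0) + (if G.Adj w c' then 1 else 0) := by
  have h : nb G w ∩ nb G v ⊆ (({a, a', b, b', c, c'} : Finset V).filter (fun u => G.Adj w u)) := by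
    intro z hz
    simp only [Finset.mem_inter, mem_nb] at hz
    have := hN z hz.2
    simp only [Finset.mem_filter, Finset.mem_insert, Finset.mem_singleton]
    exact ⟨this, hz.1⟩
  refine (Finset.card_le_card h).trans ?_
  rw [Finset.card_filter]
  have ins : ∀ (x : V) (T : Finset V) (f : V → ℕ), ∑ i ∈ insert x T, f i ≤ f x + ∑ i ∈ T, f i := by
    intro x T f
    by_cases hx : x ∈ T
    · rw [Finset.insert_eq_of_mem hx]; omega
    · rw [Finset.sum_insert hx]
  have i1 := ins a {a', b, b', c, c'} (fun u => if G.Adj w u then 1 else 0)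
  have i2 := ins a' {b, b', c, c'} (fun u => if G.Adj w u then 1 else 0)
  have i3 := ins b {b', c, c'} (fun u => if G.Adj w u then 1 else 0)
  have i4 := ins b' {c, c'} (fun u => if G.Adj w u then 1 else 0)
  have i5 := ins c {c'} (fun u => if G.Adj w u then 1 else 0)
  rw [Finset.sum_singleton] at i5
  omega

lemma lemmaO (G : SimpleGraph V) (S : Finset V) (hS : ∀ u v, G.Adj u v → v ∈ S)
    (h8 : 8 ≤ S.card) (h11 : S.card ≤ 11) (hd : ∀ w ∈ S, 6 ≤ dg G w) (v : V) (hvS : v ∈ S)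
    (hv : dg G v = 6) (ht : ∀ u, G.Adj v u → 4 ≤ cn G u v) : G.HasCompleteMinor 6 := by
  obtain ⟨a, a', b, b', c, c', hO, hN⟩ := exists_oct G v hv ht
  by_contra hcon
  have hO2 := hO.rot
  have hO3 := hO2.rot
  obtain ⟨M, hM⟩ : ∃ M, M = S \ insert v (nb G v) := ⟨_, rfl⟩
  have cM := card_M hS hvS
  rw [← hM] at cM
  have prop : ∀ w ∈ M, w ≠ v ∧ ¬ G.Adj v w := by
    intro w hw
    rw [hM] at hw
    simp only [Finset.mem_sdiff, Finset.mem_insert, mem_nb, not_or] at hw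
    exact hw.2
  have fact : ∀ w ∈ M, M.card ≤ (nb G w ∩ M).card + 1 ∧ 4 ≤ M.card ∧ (G.Adj w a ∨ G.Adj w a') ∧
      (G.Adj w b ∨ G.Adj w b') ∧ (G.Adj w c ∨ G.Adj w c') := by
    intro w hw
    obtain ⟨p1, p2⟩ := prop w hw
    have hwS : w ∈ S := by
      rw [hM] at hw
      exact (Finset.mem_sdiff.mp hw).1
    have d := hd w hwS
    rw [split_M hS p2, ← hM] at d
    have i := inter_M_le G M hw
    have k := Oct.card hN w
    have j1 : ¬ (G.Adj w a ∧ G.Adj w a') := fun h => hcon (hO.join1 p1 p2 h.1 h.2)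
    have j2 : ¬ (G.Adj w b ∧ G.Adj w b') := fun h => hcon (hO2.join1 p1 p2 h.1 h.2)
    have j3 : ¬ (G.Adj w c ∧ G.Adj w c') := fun h => hcon (hO3.join1 p1 p2 h.1 h.2)
    by_cases g1 : G.Adj w a <;> by_cases g2 : G.Adj w a' <;> by_cases g3 : G.Adj w b <;>
      by_cases g4 : G.Adj w b' <;> by_cases g5 : G.Adj w c <;> by_cases g6 : G.Adj w c' <;>
      simp only [g1, g2, g3, g4, g5, g6, if_true, if_false, and_true, true_and, not_true,
        or_true, true_or, and_self, or_self, not_false_iff] at j1 j2 j3 k ⊢ <;> omega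
  obtain ⟨w0, hw0⟩ : M.Nonempty := by rw [← Finset.card_pos]; omega
  have m4 := (fact w0 hw0).2.1
  obtain ⟨w1, w2, w3, hw1, hw2, hw3, n12, n13, n23⟩ := Finset.two_lt_card_iff.mp
    (show 2 < M.card by omega)
  have a12 : G.Adj w1 w2 := clique_of_card G M hw1 (fact w1 hw1).1 w2 hw2 n12.symm
  have a13 : G.Adj w1 w3 := clique_of_card G M hw1 (fact w1 hw1).1 w3 hw3 n13.symm
  have a23 : G.Adj w2 w3 := clique_of_card G M hw2 (fact w2 hw2).1 w3 hw3 n23.symm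
  obtain ⟨p1, q1⟩ := prop w1 hw1
  obtain ⟨p2, q2⟩ := prop w2 hw2
  obtain ⟨p3, q3⟩ := prop w3 hw3
  -- a common neighbour in each pair
  have com : ∀ x x' y y' z z', Oct G v x x' y y' z z' → (∀ w ∈ M, G.Adj w x ∨ G.Adj w x') →
      (∃ t, (t = x ∨ t = x') ∧ G.Adj w1 t ∧ G.Adj w2 t ∧ G.Adj w3 t) := by
    intro x x' y y' z z' h hx
    have hs := h.swap
    have e2 : ¬ (G.Adj w1 x ∧ G.Adj w2 x') := fun g => hcon (h.join2 p1 q1 p2 q2 a12 g.1 g.2)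
    have e3 : ¬ (G.Adj w1 x ∧ G.Adj w3 x') := fun g => hcon (h.join2 p1 q1 p3 q3 a13 g.1 g.2)
    have e4 : ¬ (G.Adj w1 x' ∧ G.Adj w2 x) := fun g => hcon (hs.join2 p1 q1 p2 q2 a12 g.1 g.2)
    have e5 : ¬ (G.Adj w1 x' ∧ G.Adj w3 x) := fun g => hcon (hs.join2 p1 q1 p3 q3 a13 g.1 g.2)
    have f1 := hx w1 hw1
    have f2 := hx w2 hw2
    have f3 := hx w3 hw3
    by_cases g : G.Adj w1 x
    · exact ⟨x, Or.inl rfl, by tauto⟩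
    · exact ⟨x', Or.inr rfl, by tauto⟩
  obtain ⟨ta, hta, ta1, ta2, ta3⟩ := com _ _ _ _ _ _ hO (fun w hw => (fact w hw).2.2.1)
  obtain ⟨tb, htb, tb1, tb2, tb3⟩ := com _ _ _ _ _ _ hO2 (fun w hw => (fact w hw).2.2.2.1)
  obtain ⟨tc, htc, tc1, tc2, tc3⟩ := com _ _ _ _ _ _ hO3 (fun w hw => (fact w hw).2.2.2.2)
  obtain ⟨naa, nbb, ncc, va, va', vb, vb', vc, vc', ab, ab', ac, ac', a'b, a'b', a'c, a'c',
    bc, bc', b'c, b'c'⟩ := hO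
  have xab : G.Adj ta tb := by
    rcases hta with rfl | rfl <;> rcases htb with rfl | rfl <;> assumption
  have xac : G.Adj ta tc := by
    rcases hta with rfl | rfl <;> rcases htc with rfl | rfl <;> assumption
  have xbc : G.Adj tb tc := by
    rcases htb with rfl | rfl <;> rcases htc with rfl | rfl <;> assumption
  exact hcon (clique6 G w1 w2 w3 ta tb tc a12 a13 ta1 tb1 tc1 a23 ta2 tb2 tc2 ta3 tb3 tc3
    xab xac xbc)

lemma con_supp {G : SimpleGraph V} {S : Finset V} (hS : ∀ u v, G.Adj u v → v ∈ S) {x y : V}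
    (hxy : G.Adj x y) : ∀ u v, (con G x y).Adj u v → v ∈ S.erase y := by
  rintro u v ⟨-, -, h, h'⟩
  rw [Finset.mem_erase]
  refine ⟨h, ?_⟩
  rcases h' with h' | ⟨-, h'⟩ | ⟨rfl, -⟩
  · exact hS _ _ h'
  · exact hS _ _ h'
  · exact hS _ _ hxy.symm

lemma cn_symm (G : SimpleGraph V) (u v : V) : cn G u v = cn G v u := by
  unfold cn; rw [Finset.inter_comm]

theorem mader (n : ℕ) (hn : 5 ≤ n) : n ≤ 11 → ∀ (S : Finset V) (k : ℕ) (G : SimpleGraph V),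
    S.card = n → (∀ u v, G.Adj u v → v ∈ S) → ∑ v, dg G v = k → 8 * n ≤ k + 18 →
    G.HasCompleteMinor 6 := by
  induction n, hn using Nat.le_induction with
  | base =>
    intro _ S k G hc hS hk h
    exfalso
    rw [sum_supp hS] at hk
    have : ∑ u ∈ S, dg G u ≤ ∑ u ∈ S, 4 := by
      apply Finset.sum_le_sum
      intro u hu
      have := inter_M_le G S hu
      have e : nb G u ∩ S = nb G u := by
        rw [Finset.inter_eq_left]
        intro z hz
        exact hS _ _ (mem_nb.mp hz)
      rw [e] at this
      unfold dg
      omega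
    rw [Finset.sum_const, hc] at this
    simp at this
    omega
  | succ n hn ih =>
    intro h11 S k
    replace ih := ih (by omega)
    induction k using Nat.strong_induction_on with
    | _ k ihk =>
    intro G hc hS hk h
    by_contra hcon
    have hk2 : k ≤ 8 * n - 9 := by
      by_contra hlt
      obtain ⟨x, hx⟩ : ∃ x, 0 < dg G x := by
        by_contra hall
        push Not at hall
        have : ∑ v, dg G v = 0 := Finset.sum_eq_zero (fun v _ => by have := hall v; omega)
        omega
      obtain ⟨y, hy⟩ := Finset.card_pos.mp hx
      rw [mem_nb] at hy
      obtain ⟨G', hle, -, -, -, hsum⟩ := del_edge G hy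
      exact hcon (minor_mono hle (ihk (k - 2) (by omega) G' hc (fun u v huv => hS u v (hle huv))
        (by omega) (by omega)))
    have ht : ∀ x y, G.Adj x y → 4 ≤ cn G x y := by
      intro x y hxy
      by_contra hlt
      have hsum := sum_con G hxy
      refine hcon (minor_con hxy (ih (S.erase y) _ (con G x y) ?_ (con_supp hS hxy) rfl ?_))
      · have := Finset.card_erase_add_one (hS _ _ hxy)
        omega
      · omega
    have hpos : ∀ v ∈ S, 0 < dg G v := by
      intro v hv
      by_contra h0
      refine hcon (ih (S.erase v) k G ?_ ?_ hk (by omega))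
      · have := Finset.card_erase_add_one hv
        omega
      · intro u w huw
        rw [Finset.mem_erase]
        refine ⟨?_, hS _ _ huw⟩
        rintro rfl
        apply h0
        exact Finset.card_pos.mpr ⟨u, mem_nb.mpr huw.symm⟩
    have h6 : ∀ v ∈ S, 6 ≤ dg G v := by
      intro v hv
      by_contra hlt
      have clq : ∀ u ∈ nb G v, (nb G v).card ≤ (nb G u ∩ nb G v).card + 1 := by
        intro u hu
        have := ht u v (mem_nb.mp hu).symm
        unfold cn at this
        unfold dg at hlt
        omega
      obtain ⟨u, hu⟩ := Finset.card_pos.mp (hpos v hv)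
      have h4 := ht u v (mem_nb.mp hu).symm
      have h5 := inter_M_le G (nb G v) hu
      unfold cn at h4
      unfold dg at hlt
      have adj : ∀ x ∈ nb G v, ∀ y ∈ nb G v, y ≠ x → G.Adj x y := fun x hx =>
        clique_of_card G (nb G v) hx (clq x hx)
      have U : ∀ m ∈ nb G v, ∀ x ∈ nb G v, ∀ y ∈ nb G v, x ≠ m → y ≠ m → ¬ G.Adj m x →
          ¬ G.Adj m y → x = y := by
        intro m hm x hx y hy hxm hym h1 h2
        exact absurd (adj m hm x hx hxm) h1
      obtain ⟨a, ha, b, hb, nab, cA, hA⟩ := pick G (nb G v) (by omega) U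
      have sub : ((nb G v).erase a).erase b ⊆ nb G v :=
        (Finset.erase_subset _ _).trans (Finset.erase_subset _ _)
      obtain ⟨c, hc', d, hd, ncd, cB, hB⟩ := pick G (((nb G v).erase a).erase b) (by omega)
        (fun m hm x hx y hy => U m (sub hm) x (sub hx) y (sub hy))
      have sub2 := (Finset.erase_subset d ((((nb G v).erase a).erase b).erase c)).trans
        (Finset.erase_subset _ _)
      obtain ⟨e, he⟩ := Finset.card_pos.mp
        (show 0 < (((((nb G v).erase a).erase b).erase c).erase d).card by omega)
      exact hcon (clique6 G v a b c d e (mem_nb.mp ha) (mem_nb.mp hb) (mem_nb.mp (sub hc'))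
        (mem_nb.mp (sub hd)) (mem_nb.mp (sub (sub2 he))) (adj a ha b hb nab.symm) (hA c hc').1
        (hA d hd).1 (hA e (sub2 he)).1 (hA c hc').2 (hA d hd).2 (hA e (sub2 he)).2
        (adj c (sub hc') d (sub hd) ncd.symm) (hB e he).1 (hB e he).2)
    have hsum : ∑ u ∈ S, dg G u = k := by rw [← sum_supp hS, hk]
    have hge : ∑ u ∈ S, 6 ≤ ∑ u ∈ S, dg G u := Finset.sum_le_sum h6
    rw [Finset.sum_const, hc, hsum, smul_eq_mul] at hge
    obtain ⟨v, hv, hv6⟩ : ∃ v ∈ S, dg G v < 7 := by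
      apply Finset.exists_lt_of_sum_lt
      rw [hsum, Finset.sum_const, hc, smul_eq_mul]
      omega
    have := h6 v hv
    exact hcon (lemmaO G S hS (by omega) (by omega) h6 v hv (by omega)
      (fun u hu => ht u v hu.symm))


/-- non-neighbours -/
noncomputable def nn (G : SimpleGraph V) (v : V) : Finset V := Finset.univ \ insert v (nb G v)

lemma mem_nn {G : SimpleGraph V} {u v : V} : u ∈ nn G v ↔ u ≠ v ∧ ¬ G.Adj v u := by
  simp [nn, mem_nb]

lemma nn_symm {G : SimpleGraph V} {u v : V} (h : u ∈ nn G v) : v ∈ nn G u := by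
  rw [mem_nn] at h ⊢
  exact ⟨h.1.symm, fun g => h.2 g.symm⟩

lemma adj_of_not_nn {G : SimpleGraph V} {u v : V} (hne : u ≠ v) (h : u ∉ nn G v) : G.Adj v u := by
  rw [mem_nn] at h
  tauto

lemma card_nn (G : SimpleGraph V) (v : V) : (nn G v).card + dg G v + 1 = Fintype.card V := by
  have := card_M (G := G) (S := Finset.univ) (fun _ _ _ => Finset.mem_univ _) (Finset.mem_univ v)
  rwa [Finset.card_univ] at this

lemma card_nn_inter (G : SimpleGraph V) {u v : V} (h : G.Adj u v) :
    (nn G u ∩ nn G v).card + dg G u + dg G v = Fintype.card V + cn G u v := by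
  have e : nn G u ∩ nn G v = (nb G u ∪ nb G v)ᶜ := by
    ext z
    have h' := h.symm
    simp only [Finset.mem_inter, mem_nn, Finset.mem_compl, Finset.mem_union, mem_nb]
    constructor
    · tauto
    · intro hz
      refine ⟨⟨?_, by tauto⟩, ?_, by tauto⟩
      · rintro rfl; tauto
      · rintro rfl; tauto
  have h1 := Finset.card_union_add_card_inter (nb G u) (nb G v)
  have h2 := Finset.card_compl_add_card (nb G u ∪ nb G v)
  rw [e]
  unfold dg cn
  omega

lemma lemC (G : SimpleGraph V) (v : V) (ht : ∀ u, G.Adj v u → 3 ≤ cn G u v)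
    (h : ∑ u ∈ nb G v, dg G u + (nn G v).card * (nn G v).card ≤
      ∑ m ∈ nn G v, dg G m + 4 * dg G v + (nn G v).card) :
    (∀ m ∈ nn G v, ∀ m' ∈ nn G v, m' ≠ m → G.Adj m m') ∧ (∀ u, G.Adj v u → cn G u v = 3) ∧
    ∑ u ∈ nb G v, dg G u + (nn G v).card * (nn G v).card =
      ∑ m ∈ nn G v, dg G m + 4 * dg G v + (nn G v).card := by
  have hS : ∀ u v, G.Adj u v → v ∈ (Finset.univ : Finset V) := fun _ _ _ => Finset.mem_univ _
  have s1 : ∑ u ∈ nb G v, dg G u =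
      dg G v + ∑ u ∈ nb G v, cn G u v + ∑ u ∈ nb G v, (nb G u ∩ nn G v).card := by
    have : dg G v = ∑ u ∈ nb G v, 1 := by simp [dg]
    rw [this, ← Finset.sum_add_distrib, ← Finset.sum_add_distrib]
    apply Finset.sum_congr rfl
    intro u hu
    exact split_N hS (mem_nb.mp hu)
  have s2 : ∑ m ∈ nn G v, dg G m =
      ∑ m ∈ nn G v, (nb G m ∩ nb G v).card + ∑ m ∈ nn G v, (nb G m ∩ nn G v).card := by
    rw [← Finset.sum_add_distrib]
    apply Finset.sum_congr rfl
    intro m hm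
    exact split_M hS (mem_nn.mp hm).2
  have s3 := double_count G (nb G v) (nn G v)
  have s4 : ∑ u ∈ nb G v, 3 ≤ ∑ u ∈ nb G v, cn G u v :=
    Finset.sum_le_sum (fun u hu => ht u (mem_nb.mp hu))
  have s5 : ∑ m ∈ nn G v, ((nb G m ∩ nn G v).card + 1) ≤ ∑ m ∈ nn G v, (nn G v).card :=
    Finset.sum_le_sum (fun m hm => inter_M_le G (nn G v) hm)
  have e4 : ∑ u ∈ nb G v, 3 = 3 * dg G v := by simp [dg, mul_comm]
  have e5 : ∑ m ∈ nn G v, ((nb G m ∩ nn G v).card + 1) =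
    ∑ m ∈ nn G v, (nb G m ∩ nn G v).card + (nn G v).card := by simp [Finset.sum_add_distrib]
  have e5' : ∑ m ∈ nn G v, (nn G v).card = (nn G v).card * (nn G v).card := by simp
  have t4 : ∑ u ∈ nb G v, 3 = ∑ u ∈ nb G v, cn G u v := by omega
  have t5 : ∑ m ∈ nn G v, ((nb G m ∩ nn G v).card + 1) = ∑ m ∈ nn G v, (nn G v).card := by omega
  rw [Finset.sum_eq_sum_iff_of_le (fun u hu => ht u (mem_nb.mp hu))] at t4
  rw [Finset.sum_eq_sum_iff_of_le (fun m hm => inter_M_le G (nn G v) hm)] at t5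
  refine ⟨fun m hm => clique_of_card G (nn G v) hm (t5 m hm).ge, fun u hu =>
    (t4 u (mem_nb.mpr hu)).symm, ?_⟩
  omega

lemma hit (D P P' Q Q' : Finset V) (hD : D.card = 4) (sP : P ⊆ D) (sP' : P' ⊆ D) (sQ : Q ⊆ D)
    (sQ' : Q' ⊆ D) (cP : 2 ≤ P.card) (cP' : 2 ≤ P'.card) (cQ : 2 ≤ Q.card) (cQ' : 2 ≤ Q'.card) :
    ∃ A B : Finset V, A ⊆ D ∧ B ⊆ D ∧ Disjoint A B ∧ (∃ x ∈ A, x ∈ P) ∧ (∃ x ∈ A, x ∈ P') ∧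
      (∃ x ∈ B, x ∈ Q) ∧ (∃ x ∈ B, x ∈ Q') := by
  have aux : ∀ (d : V) (R : Finset V), R ⊆ D → 2 ≤ R.card → ∃ x ∈ D.erase d, x ∈ R := by
    intro d R sR cR
    obtain ⟨x, hx, hxd⟩ := Finset.exists_mem_ne (show 1 < R.card by omega) d
    exact ⟨x, Finset.mem_erase.mpr ⟨hxd, sR hx⟩, hx⟩
  by_cases h1 : ∃ d ∈ P, d ∈ P'
  · obtain ⟨d, hd, hd'⟩ := h1
    exact ⟨{d}, D.erase d, by simpa using sP hd, Finset.erase_subset _ _, by simp,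
      ⟨d, by simp, hd⟩, ⟨d, by simp, hd'⟩, aux d Q sQ cQ, aux d Q' sQ' cQ'⟩
  by_cases h2 : ∃ d ∈ Q, d ∈ Q'
  · obtain ⟨d, hd, hd'⟩ := h2
    exact ⟨D.erase d, {d}, Finset.erase_subset _ _, by simpa using sQ hd, by simp,
      aux d P sP cP, aux d P' sP' cP', ⟨d, by simp, hd⟩, ⟨d, by simp, hd'⟩⟩
  push Not at h1 h2
  obtain ⟨p1, hp1, p2, hp2, n1⟩ := Finset.one_lt_card.mp (show 1 < P.card by omega)
  obtain ⟨r1, hr1, r2, hr2, n2⟩ := Finset.one_lt_card.mp (show 1 < P'.card by omega)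
  obtain ⟨q1, hq1, q2, hq2, n3⟩ := Finset.one_lt_card.mp (show 1 < Q.card by omega)
  obtain ⟨s1, hs1, s2, hs2, n4⟩ := Finset.one_lt_card.mp (show 1 < Q'.card by omega)
  have a1 : p1 ≠ r1 := by rintro rfl; exact h1 _ hp1 hr1
  have a2 : p1 ≠ r2 := by rintro rfl; exact h1 _ hp1 hr2
  have a3 : p2 ≠ r1 := by rintro rfl; exact h1 _ hp2 hr1
  have a4 : p2 ≠ r2 := by rintro rfl; exact h1 _ hp2 hr2
  have hDe : D = {p1, p2, r1, r2} := by
    symm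
    apply Finset.eq_of_subset_of_card_le
    · intro z hz
      simp only [Finset.mem_insert, Finset.mem_singleton] at hz
      rcases hz with rfl | rfl | rfl | rfl
      exacts [sP hp1, sP hp2, sP' hr1, sP' hr2]
    · rw [hD, Finset.card_insert_of_notMem (by simp [n1, a1, a2]),
        Finset.card_insert_of_notMem (by simp [a3, a4]),
        Finset.card_insert_of_notMem (by simp [n2]), Finset.card_singleton]
  have mem : ∀ z ∈ D, z = p1 ∨ z = p2 ∨ z = r1 ∨ z = r2 := by
    intro z hz
    rw [hDe] at hz
    simpa using hz
  have key : ((∃ x, (x = p2 ∨ x = r2) ∧ x ∈ Q) ∧ (∃ x, (x = p2 ∨ x = r2) ∧ x ∈ Q')) ∨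
      ((∃ x, (x = p1 ∨ x = r1) ∧ x ∈ Q) ∧ (∃ x, (x = p1 ∨ x = r1) ∧ x ∈ Q')) ∨
      ((∃ x, (x = p2 ∨ x = r1) ∧ x ∈ Q) ∧ (∃ x, (x = p2 ∨ x = r1) ∧ x ∈ Q')) := by
    have b1 := mem q1 (sQ hq1)
    have b2 := mem q2 (sQ hq2)
    have b3 := mem s1 (sQ' hs1)
    have b4 := mem s2 (sQ' hs2)
    have c1 : q1 ≠ s1 := by rintro rfl; exact h2 _ hq1 hs1
    have c2 : q1 ≠ s2 := by rintro rfl; exact h2 _ hq1 hs2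
    have c3 : q2 ≠ s1 := by rintro rfl; exact h2 _ hq2 hs1
    have c4 : q2 ≠ s2 := by rintro rfl; exact h2 _ hq2 hs2
    clear mem hDe aux sP sP' sQ sQ' h1 h2
    grind
  have fin : ∀ i j k l : V, i ∈ P → j ∈ P' → i ∈ D → j ∈ D → k ∈ D → l ∈ D → i ≠ k → i ≠ l →
      j ≠ k → j ≠ l → (∃ x, (x = k ∨ x = l) ∧ x ∈ Q) → (∃ x, (x = k ∨ x = l) ∧ x ∈ Q') →
      ∃ A B : Finset V, A ⊆ D ∧ B ⊆ D ∧ Disjoint A B ∧ (∃ x ∈ A, x ∈ P) ∧ (∃ x ∈ A, x ∈ P') ∧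
      (∃ x ∈ B, x ∈ Q) ∧ (∃ x ∈ B, x ∈ Q') := by
    intro i j k l hi hj di dj dk dl e1 e2 e3 e4 x1 x2
    refine ⟨{i, j}, {k, l}, ?_, ?_, ?_, ⟨i, by simp, hi⟩, ⟨j, by simp, hj⟩, by simpa using x1,
      by simpa using x2⟩
    · intro z hz
      simp only [Finset.mem_insert, Finset.mem_singleton] at hz
      rcases hz with rfl | rfl <;> assumption
    · intro z hz
      simp only [Finset.mem_insert, Finset.mem_singleton] at hz
      rcases hz with rfl | rfl <;> assumption
    · rw [Finset.disjoint_left]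
      intro z hz
      simp only [Finset.mem_insert, Finset.mem_singleton] at hz ⊢
      rcases hz with rfl | rfl <;> tauto
  rcases key with ⟨x1, x2⟩ | ⟨x1, x2⟩ | ⟨x1, x2⟩
  · exact fin p1 r1 p2 r2 hp1 hr1 (sP hp1) (sP' hr1) (sP hp2) (sP' hr2) n1 a2 a3.symm n2 x1 x2
  · exact fin p2 r2 p1 r1 hp2 hr2 (sP hp2) (sP' hr2) (sP hp1) (sP' hr1) n1.symm a3 a2.symm n2.symm
      x1 x2
  · exact fin p1 r2 p2 r1 hp1 hr2 (sP hp1) (sP' hr2) (sP hp2) (sP' hr1) n1 a1 a4.symm n2.symm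
      x1 x2

lemma lemQ (G : SimpleGraph V) (S : Finset V) (hS : ∀ u v, G.Adj u v → v ∈ S)
    (hc : S.card = 10) (hsum : ∑ v, dg G v = 60) (c : V) (hcS : c ∈ S) (hc5 : dg G c = 5)
    (hmax : ∑ u ∈ nb G c, max (dg G u) 6 ≤ 32) : G.HasCompleteMinor 6 := by
  by_contra hcon
  have ht : ∀ x y, G.Adj x y → 3 ≤ cn G x y := by
    intro x y hxy
    by_contra hlt
    have hs := sum_con G hxy
    refine hcon (minor_con hxy (mader 9 (by norm_num) (by norm_num) (S.erase y) _ (con G x y) ?_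
      (con_supp hS hxy) rfl ?_))
    · have := Finset.card_erase_add_one (hS _ _ hxy)
      omega
    · omega
  obtain ⟨D, hD⟩ : ∃ D, D = S \ insert c (nb G c) := ⟨_, rfl⟩
  have cD := card_M hS hcS
  rw [← hD] at cD
  have cN : (nb G c).card = 5 := hc5
  have U : ∀ m ∈ nb G c, ∀ x ∈ nb G c, ∀ y ∈ nb G c, x ≠ m → y ≠ m → ¬ G.Adj m x →
      ¬ G.Adj m y → x = y := by
    intro m hm
    apply uniq_of_card G (nb G c) hm
    have := ht m c (mem_nb.mp hm).symm
    unfold cn at this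
    omega
  obtain ⟨p, hp, p', hp', npp, cA, hA⟩ := pick G (nb G c) (by omega) U
  have sub : ((nb G c).erase p).erase p' ⊆ nb G c :=
    (Finset.erase_subset _ _).trans (Finset.erase_subset _ _)
  obtain ⟨q, hq, q', hq', nqq, cB, hB⟩ := pick G (((nb G c).erase p).erase p') (by omega)
    (fun m hm x hx y hy => U m (sub hm) x (sub hx) y (sub hy))
  have sub2 := (Finset.erase_subset q' ((((nb G c).erase p).erase p').erase q)).trans
    (Finset.erase_subset _ _)
  obtain ⟨r, hr⟩ := Finset.card_pos.mp
    (show 0 < (((((nb G c).erase p).erase p').erase q).erase q').card by omega)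
  have cp := mem_nb.mp hp
  have cp' := mem_nb.mp hp'
  have cq := mem_nb.mp (sub hq)
  have cq' := mem_nb.mp (sub hq')
  have cr := mem_nb.mp (sub (sub2 hr))
  obtain ⟨pq, p'q⟩ := hA q hq
  obtain ⟨pq', p'q'⟩ := hA q' hq'
  obtain ⟨pr, p'r⟩ := hA r (sub2 hr)
  obtain ⟨qr, q'r⟩ := hB r hr
  have npq := pq.ne
  have np'q := p'q.ne
  have npq' := pq'.ne
  have np'q' := p'q'.ne
  have npr := pr.ne
  have np'r := p'r.ne
  have nqr := qr.ne
  have nq'r := q'r.ne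
  have hNe : nb G c = {p, p', q, q', r} := by
    symm
    apply Finset.eq_of_subset_of_card_le
    · intro z hz
      simp only [Finset.mem_insert, Finset.mem_singleton] at hz
      rw [mem_nb]
      rcases hz with rfl | rfl | rfl | rfl | rfl <;> assumption
    · rw [cN, Finset.card_insert_of_notMem (by simp [npp, npq, npq', npr]),
        Finset.card_insert_of_notMem (by simp [np'q, np'q', np'r]),
        Finset.card_insert_of_notMem (by simp [nqq, nqr]),
        Finset.card_insert_of_notMem (by simp [nq'r]), Finset.card_singleton]
  have sum5 : ∀ f : V → ℕ, ∑ u ∈ nb G c, f u = f p + f p' + f q + f q' + f r := by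
    intro f
    rw [hNe, Finset.sum_insert (by simp [npp, npq, npq', npr]),
        Finset.sum_insert (by simp [np'q, np'q', np'r]),
        Finset.sum_insert (by simp [nqq, nqr]),
        Finset.sum_insert (by simp [nq'r]), Finset.sum_singleton]
    ring
  have r4 : 4 ≤ cn G r c := by
    have : ({p, p', q, q'} : Finset V) ⊆ nb G r ∩ nb G c := by
      intro z hz
      simp only [Finset.mem_insert, Finset.mem_singleton] at hz
      rw [Finset.mem_inter, mem_nb, mem_nb]
      rcases hz with rfl | rfl | rfl | rfl
      exacts [⟨pr.symm, cp⟩, ⟨p'r.symm, cp'⟩, ⟨qr.symm, cq⟩, ⟨q'r.symm, cq'⟩]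
    have h := Finset.card_le_card this
    rw [Finset.card_insert_of_notMem (by simp [npp, npq, npq']),
        Finset.card_insert_of_notMem (by simp [np'q, np'q']),
        Finset.card_insert_of_notMem (by simp [nqq]), Finset.card_singleton] at h
    exact h
  have tp := ht p c cp.symm
  have tp' := ht p' c cp'.symm
  have tq := ht q c cq.symm
  have tq' := ht q' c cq'.symm
  have sp := split_N hS cp
  have sp' := split_N hS cp'
  have sq := split_N hS cq
  have sq' := split_N hS cq'
  have sr := split_N hS cr
  rw [← hD] at sp sp' sq sq' sr
  have tot := sum_split hS hcS (dg G)
  rw [← sum_supp hS, hsum, hc5, sum5, ← hD] at tot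
  have sD : ∑ m ∈ D, dg G m =
      ∑ m ∈ D, (nb G m ∩ nb G c).card + ∑ m ∈ D, (nb G m ∩ D).card := by
    rw [← Finset.sum_add_distrib]
    apply Finset.sum_congr rfl
    intro m hm
    rw [hD] at hm ⊢
    refine split_M hS ?_
    simp only [Finset.mem_sdiff, Finset.mem_insert, mem_nb, not_or] at hm
    exact hm.2.2
  have dc := double_count G (nb G c) D
  rw [sum5] at dc
  have s5 : ∑ m ∈ D, ((nb G m ∩ D).card + 1) ≤ ∑ m ∈ D, D.card :=
    Finset.sum_le_sum (fun m hm => inter_M_le G D hm)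
  have e5 : ∑ m ∈ D, ((nb G m ∩ D).card + 1) = ∑ m ∈ D, (nb G m ∩ D).card + D.card := by
    simp [Finset.sum_add_distrib]
  have e5' : ∑ m ∈ D, D.card = 16 := by
    rw [Finset.sum_const, show D.card = 4 by omega]; rfl
  rw [sum5] at hmax
  unfold cn at tp tp' tq tq' r4
  have mp := le_max_left (dg G p) 6
  have mp' := le_max_left (dg G p') 6
  have mq := le_max_left (dg G q) 6
  have mq' := le_max_left (dg G q') 6
  have mr := le_max_left (dg G r) 6
  have kp := le_max_right (dg G p) 6
  have kp' := le_max_right (dg G p') 6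
  have kq := le_max_right (dg G q) 6
  have kq' := le_max_right (dg G q') 6
  have t5 : ∑ m ∈ D, ((nb G m ∩ D).card + 1) = ∑ m ∈ D, D.card := by omega
  have gp : 2 ≤ (nb G p ∩ D).card := by omega
  have gp' : 2 ≤ (nb G p' ∩ D).card := by omega
  have gq : 2 ≤ (nb G q ∩ D).card := by omega
  have gq' : 2 ≤ (nb G q' ∩ D).card := by omega
  rw [Finset.sum_eq_sum_iff_of_le (fun m hm => inter_M_le G D hm)] at t5
  have clq : ∀ m ∈ D, ∀ m' ∈ D, m' ≠ m → G.Adj m m' :=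
    fun m hm => clique_of_card G D hm (t5 m hm).ge
  obtain ⟨A, B, sA, sB, dAB, ⟨x1, hx1, hx1'⟩, ⟨x2, hx2, hx2'⟩, ⟨x3, hx3, hx3'⟩, x4, hx4, hx4'⟩ :=
    hit D (nb G p ∩ D) (nb G p' ∩ D) (nb G q ∩ D) (nb G q' ∩ D) (by omega)
    Finset.inter_subset_right Finset.inter_subset_right Finset.inter_subset_right
    Finset.inter_subset_right gp gp' gq gq'
  simp only [Finset.mem_inter, mem_nb] at hx1' hx2' hx3' hx4'
  have out : ∀ z ∈ D, z ≠ c ∧ z ≠ p ∧ z ≠ p' ∧ z ≠ q ∧ z ≠ q' ∧ z ≠ r := by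
    intro z hz
    rw [hD, Finset.mem_sdiff, Finset.mem_insert, hNe] at hz
    simp only [Finset.mem_insert, Finset.mem_singleton] at hz
    tauto
  have outA : ∀ z ∈ A, z ≠ c ∧ z ≠ p ∧ z ≠ p' ∧ z ≠ q ∧ z ≠ q' ∧ z ≠ r := fun z hz => out z (sA hz)
  have outB : ∀ z ∈ B, z ≠ c ∧ z ≠ p ∧ z ≠ p' ∧ z ≠ q ∧ z ≠ q' ∧ z ≠ r := fun z hz => out z (sB hz)
  have dAB' : ∀ z ∈ A, z ∉ B := Finset.disjoint_left.mp dAB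
  apply hcon
  refine minor6 G {c} {r} (insert p (A : Set V)) {p'} (insert q (B : Set V)) {q'}
    (conn_singleton G _) (conn_singleton G _)
    (conn_clique G p A (fun x hx y hy hxy => clq x (sA hx) y (sA hy) hxy.symm) ⟨x1, hx1, hx1'.1⟩)
    (conn_singleton G _)
    (conn_clique G q B (fun x hx y hy hxy => clq x (sB hx) y (sB hy) hxy.symm) ⟨x3, hx3, hx3'.1⟩)
    (conn_singleton G _) ?_ ?_ ?_ ?_ ?_ ?_ ?_ ?_ ?_ ?_ ?_ ?_ ?_ ?_ ?_
    ⟨c, rfl, r, rfl, cr⟩ ⟨c, rfl, p, Or.inl rfl, cp⟩ ⟨c, rfl, p', rfl, cp'⟩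
    ⟨c, rfl, q, Or.inl rfl, cq⟩ ⟨c, rfl, q', rfl, cq'⟩
    ⟨r, rfl, p, Or.inl rfl, pr.symm⟩ ⟨r, rfl, p', rfl, p'r.symm⟩
    ⟨r, rfl, q, Or.inl rfl, qr.symm⟩ ⟨r, rfl, q', rfl, q'r.symm⟩
    ⟨x2, Or.inr hx2, p', rfl, hx2'.1.symm⟩ ⟨p, Or.inl rfl, q, Or.inl rfl, pq⟩
    ⟨p, Or.inl rfl, q', rfl, pq'⟩ ⟨p', rfl, q, Or.inl rfl, p'q⟩ ⟨p', rfl, q', rfl, p'q'⟩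
    ⟨x4, Or.inr hx4, q', rfl, hx4'.1.symm⟩
  all_goals
    have ncp := cp.ne
    have ncp' := cp'.ne
    have ncq := cq.ne
    have ncq' := cq'.ne
    have ncr := cr.ne
    intro x hx hx'
    simp only [Set.mem_insert_iff, Set.mem_singleton_iff, Finset.mem_coe] at hx hx'
    clear * - hx hx' ncp ncp' ncq ncq' ncr npp npq np'q npq' np'q' npr np'r nqr nq'r nqq outA outB dAB'
    grind


lemma nn_ten (G : SimpleGraph V) (hV : Fintype.card V = 10) (hd : ∀ v, dg G v = 6)
    (ht : ∀ x y, G.Adj x y → 3 ≤ cn G x y) : G.HasCompleteMinor 6 := by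
  have hc : ∀ v, (nn G v).card = 3 := by
    intro v
    have := card_nn G v
    have := hd v
    omega
  have hC := fun v => lemC G v (fun u hu => ht u v hu.symm) (by
    rw [Finset.sum_congr rfl (fun u _ => hd u), Finset.sum_congr rfl (fun u _ => hd u)]
    have e : (nb G v).card = 6 := hd v
    simp [hc, hd, e])
  have F1 : ∀ v m m', m ∈ nn G v → m' ∈ nn G v → m ≠ m' → G.Adj m m' :=
    fun v m m' h h' hne => (hC v).1 m h m' h' hne.symm
  have F3 : ∀ u v, G.Adj u v → (nn G u ∩ nn G v).card = 1 := by
    intro u v h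
    have h1 := card_nn_inter G h
    have h2 := (hC v).2.1 u h.symm
    have := hd u
    have := hd v
    omega
  have U : ∀ u u' p q, G.Adj u u' → p ∈ nn G u → p ∈ nn G u' → q ∈ nn G u → q ∈ nn G u' →
      p = q := by
    intro u u' p q h a b c d
    exact Finset.card_le_one_iff.mp (F3 u u' h).le (Finset.mem_inter.mpr ⟨a, b⟩) (Finset.mem_inter.mpr ⟨c, d⟩)
  have E : ∀ u u', G.Adj u u' → ∃ p, p ∈ nn G u ∧ p ∈ nn G u' := by
    intro u u' h
    have : 0 < (nn G u ∩ nn G u').card := by rw [F3 u u' h]; norm_num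
    obtain ⟨p, hp⟩ := Finset.card_pos.mp this
    exact ⟨p, Finset.mem_inter.mp hp⟩
  have T : ∀ w v p, v ∈ nn G w → p ∈ nn G w → v ≠ p → ∃ q, q ∈ nn G w ∧ q ≠ v ∧ q ≠ p ∧
      ∀ z ∈ nn G w, z = v ∨ z = p ∨ z = q := by
    intro w v p hv hp hne
    have h1 := Finset.card_erase_add_one hv
    have h2 := Finset.card_erase_add_one (Finset.mem_erase.mpr ⟨hne.symm, hp⟩)
    have h3 := hc w
    obtain ⟨q, hq⟩ := Finset.card_eq_one.mp (show (((nn G w).erase v).erase p).card = 1 by omega)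
    have hm : ∀ z, z ∈ ((nn G w).erase v).erase p ↔ z = q := by
      intro z
      rw [hq, Finset.mem_singleton]
    simp only [Finset.mem_erase] at hm
    have hqq := (hm q).mpr rfl
    refine ⟨q, hqq.2.2, hqq.2.1, hqq.1, ?_⟩
    intro z hz
    have := hm z
    tauto
  have P2 : ∀ w v, ∃ p, p ∈ nn G w ∧ p ≠ v := by
    intro w v
    exact Finset.exists_mem_ne (by rw [hc w]; norm_num) v
  have hne : Nonempty V := Fintype.card_pos_iff.mp (by omega)
  obtain ⟨v⟩ := hne
  obtain ⟨w1, w2, w3, w12, w13, w23, hw⟩ := Finset.card_eq_three.mp (hc v)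
  have m1 : w1 ∈ nn G v := by simp [hw]
  have m2 : w2 ∈ nn G v := by simp [hw]
  have m3 : w3 ∈ nn G v := by simp [hw]
  have v1 := nn_symm m1
  have v2 := nn_symm m2
  have v3 := nn_symm m3
  have a12 := F1 v _ _ m1 m2 w12
  have a13 := F1 v _ _ m1 m3 w13
  have a23 := F1 v _ _ m2 m3 w23
  -- elements of `nn w_i` other than `v` are adjacent to `v` and to the other `w_j`
  have av : ∀ w y, v ∈ nn G w → y ∈ nn G w → y ≠ v → G.Adj v y :=
    fun w y h h' hn => F1 w _ _ h h' hn.symm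
  have aw : ∀ w w' y, G.Adj w w' → v ∈ nn G w → v ∈ nn G w' → y ∈ nn G w → y ≠ v →
      G.Adj w' y := by
    intro w w' y ha h h' hy hn
    apply adj_of_not_nn
    · rintro rfl
      exact (mem_nn.mp hy).2 ha
    · intro hy'
      exact hn (U w w' y v ha hy hy' h h')
  have dd : ∀ w w' y y', G.Adj w w' → v ∈ nn G w → v ∈ nn G w' → y ∈ nn G w → y ≠ v →
      y' ∈ nn G w' → y ≠ y' := by
    rintro w w' y y' ha h h' hy hn hy' rfl
    exact hn (U w w' y v ha hy hy' h h')
  obtain ⟨y1, k1, n1⟩ := P2 w1 v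
  obtain ⟨y1', k1', n1', d1, -⟩ := T w1 v y1 v1 k1 n1.symm
  obtain ⟨y2', s2, k2'⟩ := E y1 w2 (aw _ _ _ a12 v1 v2 k1 n1).symm
  have n2' : y2' ≠ v := by
    rintro rfl
    exact (mem_nn.mp s2).2 (av w1 y1 v1 k1 n1).symm
  obtain ⟨y2, k2, n2, d2, -⟩ := T w2 v y2' v2 k2' n2'.symm
  obtain ⟨y3', s3, k3'⟩ := E y1 w3 (aw _ _ _ a13 v1 v3 k1 n1).symm
  have n3' : y3' ≠ v := by
    rintro rfl
    exact (mem_nn.mp s3).2 (av w1 y1 v1 k1 n1).symm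
  obtain ⟨y3, k3, n3, d3, c3⟩ := T w3 v y3' v3 k3' n3'.symm
  have e12 : G.Adj y1 y2 := by
    apply adj_of_not_nn (dd _ _ _ _ a12 v1 v2 k1 n1 k2).symm
    intro h
    exact d2 (U y1 w2 y2 y2' (aw _ _ _ a12 v1 v2 k1 n1).symm h k2 s2 k2')
  have e13 : G.Adj y1 y3 := by
    apply adj_of_not_nn (dd _ _ _ _ a13 v1 v3 k1 n1 k3).symm
    intro h
    exact d3 (U y1 w3 y3 y3' (aw _ _ _ a13 v1 v3 k1 n1).symm h k3 s3 k3')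
  have e23' : G.Adj y2' y3' := F1 y1 _ _ s2 s3 (dd _ _ _ _ a23 v2 v3 k2' n2' k3')
  have f23 : y3 ∈ nn G y2' := by
    obtain ⟨p, hp, hp3⟩ := E y2' w3 (aw _ _ _ a23 v2 v3 k2' n2').symm
    rcases c3 p hp3 with rfl | rfl | rfl
    · exact absurd (av w2 y2' v2 k2' n2').symm (mem_nn.mp hp).2
    · exact absurd e23' (mem_nn.mp hp).2
    · exact hp
  have b32 : G.Adj w2 y3 := aw _ _ _ a23.symm v3 v2 k3 n3
  have e23 : G.Adj y2 y3 := by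
    apply SimpleGraph.Adj.symm
    apply adj_of_not_nn (dd _ _ _ _ a23 v2 v3 k2 n2 k3)
    intro h
    exact d2 (U y3 w2 y2 y2' b32.symm h k2 (nn_symm f23) k2')
  have e22 : G.Adj y2 y2' := F1 w2 _ _ k2 k2' d2
  have c31' : G.Adj w3 y1' := aw _ _ _ a13 v1 v3 k1' n1'
  have c32' : G.Adj w2 y3' := aw _ _ _ a23.symm v3 v2 k3' n3'
  have r1 := av w1 y1 v1 k1 n1
  have r1' := av w1 y1' v1 k1' n1'
  have r2 := av w2 y2 v2 k2 n2
  have r2' := av w2 y2' v2 k2' n2'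
  have r3 := av w3 y3 v3 k3 n3
  have r3' := av w3 y3' v3 k3' n3'
  have p12 := aw _ _ _ a12 v1 v2 k1 n1
  have p12' := aw _ _ _ a12 v1 v2 k1' n1'
  have p13 := aw _ _ _ a13 v1 v3 k1 n1
  have p21 := aw _ _ _ a12.symm v2 v1 k2 n2
  have p21' := aw _ _ _ a12.symm v2 v1 k2' n2'
  have p23 := aw _ _ _ a23 v2 v3 k2 n2
  have p23' := aw _ _ _ a23 v2 v3 k2' n2'
  have p31 := aw _ _ _ a13.symm v3 v1 k3 n3
  have p31' := aw _ _ _ a13.symm v3 v1 k3' n3'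
  have g1 := (mem_nn.mp k1).1
  have g1' := (mem_nn.mp k1').1
  have g2 := (mem_nn.mp k2).1
  have g2' := (mem_nn.mp k2').1
  have g3 := (mem_nn.mp k3).1
  have g3' := (mem_nn.mp k3').1
  have h1 := (mem_nn.mp v1).1
  have h2 := (mem_nn.mp v2).1
  have h3 := (mem_nn.mp v3).1
  have q1 := dd _ _ _ _ a12 v1 v2 k1 n1 k2'
  have q2 := dd _ _ _ _ a13 v1 v3 k1 n1 k3'
  have q3 := dd _ _ _ _ a12 v1 v2 k1' n1' k2
  have q4 := dd _ _ _ _ a13 v1 v3 k1' n1' k3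
  have q5 := dd _ _ _ _ a12 v1 v2 k1' n1' k2'
  have q6 := dd _ _ _ _ a13 v1 v3 k1' n1' k3'
  have q7 := dd _ _ _ _ a23 v2 v3 k2 n2 k3'
  have q8 := dd _ _ _ _ a23 v2 v3 k2' n2' k3
  have z1 := r1.ne
  have z2 := r1'.ne
  have z3 := r2.ne
  have z4 := r2'.ne
  have z5 := r3.ne
  have z6 := r3'.ne
  have z7 := p12.ne
  have z8 := p12'.ne
  have z9 := p13.ne
  have z10 := p21.ne
  have z11 := p21'.ne
  have z12 := p23.ne
  have z13 := p23'.ne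
  have z14 := p31.ne
  have z15 := p31'.ne
  have z16 := b32.ne
  have z17 := c31'.ne
  have z18 := c32'.ne
  have z19 := e12.ne
  have z20 := e13.ne
  have z21 := e23.ne
  refine minor6 G {v} {y1} {y2} {y3} (insert y1' (insert w3 {w1})) (insert y3' (insert w2 {y2'}))
    (conn_singleton G _) (conn_singleton G _) (conn_singleton G _) (conn_singleton G _)
    (conn_insert G _ _ w3 (conn_insert G _ _ w1 (conn_singleton G _) rfl a13.symm) (by simp)
      c31'.symm) ?_
    ?_ ?_ ?_ ?_ ?_ ?_ ?_ ?_ ?_ ?_ ?_ ?_ ?_ ?_ ?_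
    ⟨v, by simp, y1, by simp, r1⟩ ⟨v, by simp, y2, by simp, r2⟩ ⟨v, by simp, y3, by simp, r3⟩
    ⟨v, by simp, y1', by simp, r1'⟩ ⟨v, by simp, y3', by simp, r3'⟩
    ⟨y1, by simp, y2, by simp, e12⟩ ⟨y1, by simp, y3, by simp, e13⟩
    ⟨y1, by simp, w3, by simp, p13.symm⟩ ⟨y1, by simp, w2, by simp, p12.symm⟩
    ⟨y2, by simp, y3, by simp, e23⟩ ⟨y2, by simp, w1, by simp, p21.symm⟩
    ⟨y2, by simp, y2', by simp, e22⟩ ⟨y3, by simp, w1, by simp, p31.symm⟩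
    ⟨y3, by simp, w2, by simp, b32.symm⟩ ⟨w1, by simp, w2, by simp, a12⟩
  · rw [Set.insert_comm]
    exact conn_insert G _ _ y3' (conn_insert G _ _ y2' (conn_singleton G _) rfl e23'.symm)
      (by simp) c32'
  all_goals
    clear hC F1 F3 U E T P2 av aw dd hc hd ht
    simp only [Set.mem_insert_iff, Set.mem_singleton_iff]
    grind

lemma con_mader (G : SimpleGraph V) (n : ℕ) (h5 : 5 ≤ n) (h11 : n ≤ 11)
    (hV : Fintype.card V = n + 1) {x y : V} (hxy : G.Adj x y)
    (h : 8 * n + 2 * cn G x y + 2 ≤ ∑ v, dg G v + 18) : G.HasCompleteMinor 6 := by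
  have hs := sum_con G hxy
  refine minor_con hxy (mader n h5 h11 (Finset.univ.erase y) _ (con G x y) ?_
    (con_supp (fun _ _ _ => Finset.mem_univ _) hxy) rfl (by omega))
  rw [Finset.card_erase_of_mem (Finset.mem_univ y), Finset.card_univ]
  omega

lemma sum_bound (N : Finset V) (f : V → ℕ) (x b : V) (k l : ℕ)
    (h : ∀ z ∈ N, f z ≤ 6 + (if z = x then k else 0) + (if z = b then l else 0)) :
    ∑ z ∈ N, f z ≤ 6 * N.card + k + l := by
  refine (Finset.sum_le_sum h).trans ?_
  rw [Finset.sum_add_distrib, Finset.sum_add_distrib, Finset.sum_ite_eq', Finset.sum_ite_eq',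
    Finset.sum_const, smul_eq_mul]
  split_ifs <;> omega

lemma nn_eleven (G : SimpleGraph V) (hV : Fintype.card V = 11) (hd : ∀ v, dg G v = 6)
    (ht : ∀ x y, G.Adj x y → 3 ≤ cn G x y) : False := by
  have hc : ∀ v, (nn G v).card = 4 := by
    intro v
    have := card_nn G v
    have := hd v
    omega
  have hC := fun v => lemC G v (fun u hu => ht u v hu.symm) (by
    rw [Finset.sum_congr rfl (fun u _ => hd u), Finset.sum_congr rfl (fun u _ => hd u)]
    have e : (nb G v).card = 6 := hd v
    simp [hc, hd, e])
  have F1 : ∀ v m m', m ∈ nn G v → m' ∈ nn G v → m ≠ m' → G.Adj m m' :=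
    fun v m m' h h' hne => (hC v).1 m h m' h' hne.symm
  have F3 : ∀ u v, G.Adj u v → (nn G u ∩ nn G v).card = 2 := by
    intro u v h
    have h1 := card_nn_inter G h
    have h2 := (hC v).2.1 u h.symm
    have := hd u
    have := hd v
    omega
  have hne : Nonempty V := Fintype.card_pos_iff.mp (by omega)
  obtain ⟨v⟩ := hne
  have hp : 0 < (nb G v).card := by
    have : (nb G v).card = 6 := hd v
    omega
  obtain ⟨n, hn⟩ := Finset.card_pos.mp hp
  have hvn := mem_nb.mp hn
  have c2 := F3 v n hvn
  have e1 := Finset.card_sdiff_add_card_inter (nn G n) (nn G v)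
  have e2 := Finset.card_sdiff_add_card_inter (nn G v) (nn G n)
  rw [Finset.inter_comm, c2, hc] at e1
  rw [c2, hc] at e2
  obtain ⟨n1, n2, n12, hN⟩ := Finset.card_eq_two.mp (show (nn G n \ nn G v).card = 2 by omega)
  obtain ⟨m3, m4, m34, hM⟩ := Finset.card_eq_two.mp (show (nn G v \ nn G n).card = 2 by omega)
  have k3 : m3 ∈ nn G v ∧ m3 ∉ nn G n := by
    rw [← Finset.mem_sdiff, hM]; simp
  have k4 : m4 ∈ nn G v ∧ m4 ∉ nn G n := by
    rw [← Finset.mem_sdiff, hM]; simp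
  have key : ∀ n', n' ∈ nn G n → n' ∉ nn G v → G.Adj v n' ∧ n' ∈ nn G m3 ∧ n' ∈ nn G m4 := by
    intro n' h h'
    have hnv : n' ≠ v := by
      rintro rfl
      exact (mem_nn.mp h).2 hvn.symm
    have ha := adj_of_not_nn hnv h'
    have hsub : nn G v ∩ nn G n' ⊆ nn G v \ nn G n := by
      intro m hm
      rw [Finset.mem_inter] at hm
      rw [Finset.mem_sdiff]
      refine ⟨hm.1, fun hm' => ?_⟩
      have hne : m ≠ n' := (mem_nn.mp hm.2).1
      exact (mem_nn.mp hm.2).2 (F1 n _ _ h hm' hne.symm)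
    have heq := Finset.eq_of_subset_of_card_le hsub (by rw [F3 v n' ha]; omega)
    refine ⟨ha, nn_symm ?_, nn_symm ?_⟩
    · have : m3 ∈ nn G v \ nn G n := Finset.mem_sdiff.mpr k3
      rw [← heq] at this
      exact (Finset.mem_inter.mp this).2
    · have : m4 ∈ nn G v \ nn G n := Finset.mem_sdiff.mpr k4
      rw [← heq] at this
      exact (Finset.mem_inter.mp this).2
  have l1 : n1 ∈ nn G n ∧ n1 ∉ nn G v := by
    rw [← Finset.mem_sdiff, hN]; simp
  have l2 : n2 ∈ nn G n ∧ n2 ∉ nn G v := by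
    rw [← Finset.mem_sdiff, hN]; simp
  obtain ⟨a1, b1, c1⟩ := key n1 l1.1 l1.2
  obtain ⟨a2, b2, c2'⟩ := key n2 l2.1 l2.2
  have hlast := F3 m3 m4 (F1 v _ _ k3.1 k4.1 m34)
  have hsub : ({v, n1, n2} : Finset V) ⊆ nn G m3 ∩ nn G m4 := by
    intro z hz
    simp only [Finset.mem_insert, Finset.mem_singleton] at hz
    rw [Finset.mem_inter]
    rcases hz with rfl | rfl | rfl
    · exact ⟨nn_symm k3.1, nn_symm k4.1⟩
    · exact ⟨b1, c1⟩
    · exact ⟨b2, c2'⟩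
  have h3 : ({v, n1, n2} : Finset V).card = 3 :=
    Finset.card_eq_three.mpr ⟨v, n1, n2, a1.ne, a2.ne, n12, rfl⟩
  have := Finset.card_le_card hsub
  omega

lemma reg_eleven (G : SimpleGraph V) (hV : Fintype.card V = 11) (hd : ∀ v, dg G v = 6) :
    G.HasCompleteMinor 6 := by
  by_contra hcon
  have hsum : ∑ v, dg G v = 66 := by simp [hd, hV]
  refine nn_eleven G hV hd (fun x y hxy => ?_)
  by_contra hlt
  by_cases h1 : cn G x y ≤ 1
  · exact hcon (con_mader G 10 (by norm_num) (by norm_num) hV hxy (by omega))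
  have h2 : cn G x y = 2 := by omega
  obtain ⟨c, hc⟩ := Finset.card_pos.mp (show 0 < (nb G x ∩ nb G y).card by
    have : (nb G x ∩ nb G y).card = 2 := h2
    omega)
  rw [Finset.mem_inter, mem_nb, mem_nb] at hc
  have hs := sum_con G hxy
  have hc5 := dg_con_common G hc.1 hc.2 hxy.ne
  rw [hd c] at hc5
  have hc5 : dg (con G x y) c = 5 := by omega
  refine hcon (minor_con hxy (lemQ (con G x y) (Finset.univ.erase y)
    (con_supp (fun _ _ _ => Finset.mem_univ _) hxy) ?_ (by omega) c ?_ hc5 ?_))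
  · rw [Finset.card_erase_of_mem (Finset.mem_univ y), Finset.card_univ]
    omega
  · exact Finset.mem_erase.mpr ⟨hc.2.ne', Finset.mem_univ c⟩
  · have hb := sum_bound (nb (con G x y) c) (fun z => max (dg (con G x y) z) 6) x x 2 0 (by
      intro z _
      by_cases hz : z = x
      · subst hz
        have := dg_con_self G hxy hxy.ne
        have := hd z
        have := hd y
        simp
        omega
      · have := dg_con_le G hz hxy.ne
        have := hd z
        simp [hz]
        omega)
    have : (nb (con G x y) c).card = 5 := hc5
    omega

lemma ex_eleven (G : SimpleGraph V) (hV : Fintype.card V = 11) (hd : ∀ v, 6 ≤ dg G v)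
    (hsum : ∑ v, dg G v = 68) : G.HasCompleteMinor 6 := by
  by_contra hcon
  have ht : ∀ x y, G.Adj x y → 3 ≤ cn G x y := by
    intro x y hxy
    by_contra hlt
    exact hcon (con_mader G 10 (by norm_num) (by norm_num) hV hxy (by omega))
  have low' : ∀ T : Finset V, 6 * T.card ≤ ∑ v ∈ T, dg G v := by
    intro T
    have := Finset.card_nsmul_le_sum T (fun v => dg G v) 6 (fun v _ => hd v)
    rw [smul_eq_mul] at this
    omega
  have low : ∀ T : Finset V, ∑ v ∈ T, dg G v ≤ 2 + 6 * T.card := by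
    intro T
    have h1 := Finset.sum_add_sum_compl T (dg G)
    have h2 := low' Tᶜ
    have h3 := Finset.card_compl_add_card T
    omega
  have low2 : ∀ x y, x ≠ y → dg G x + dg G y ≤ 14 := by
    intro x y h
    have := low {x, y}
    rwa [Finset.sum_pair h, Finset.card_pair h] at this
  have low3 : ∀ x y z, x ≠ y → x ≠ z → y ≠ z → dg G x + dg G y + dg G z ≤ 20 := by
    intro x y z h1 h2 h3
    have := low {x, y, z}
    rw [Finset.sum_insert (by simp [h1, h2]), Finset.sum_pair h3,
      Finset.card_insert_of_notMem (by simp [h1, h2]), Finset.card_pair h3] at this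
    omega
  obtain ⟨a, ha⟩ : ∃ a, 7 ≤ dg G a := by
    by_contra hno
    push Not at hno
    have : ∑ v, dg G v ≤ ∑ v : V, 6 := Finset.sum_le_sum (fun v _ => by have := hno v; omega)
    simp [hV] at this
    omega
  have step : ∀ v, v ∈ nn G a → dg G v = 6 → dg G a = 7 ∧
      (∀ m ∈ nn G v, ∀ m' ∈ nn G v, m' ≠ m → G.Adj m m') ∧ (∀ u, G.Adj v u → cn G u v = 3) := by
    intro v hv h6
    have hav := nn_symm hv
    have s1 : ∑ u, dg G u = dg G v + ∑ u ∈ nb G v, dg G u + ∑ u ∈ nn G v, dg G u :=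
      sum_split (G := G) (fun _ _ _ => Finset.mem_univ _) (Finset.mem_univ v) (dg G)
    have s2 := Finset.add_sum_erase (nn G v) (dg G) hav
    have s3 := low' ((nn G v).erase a)
    have s4 := Finset.card_erase_add_one hav
    have s5 := card_nn G v
    have hM : (nn G v).card = 4 := by omega
    obtain ⟨r1, r2, r3⟩ := lemC G v (fun u hu => ht u v hu.symm) (by rw [hM]; omega)
    rw [hM] at r3
    exact ⟨by omega, r1, r2⟩
  have hcard := card_nn G a
  have ha8 : dg G a ≤ 8 := by simpa using low {a}
  obtain ⟨v, hv⟩ := Finset.card_pos.mp (show 0 < (nn G a).card by omega)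
  have ha7 : dg G a = 7 := by
    by_contra h7
    have := low2 v a (mem_nn.mp hv).1
    have := hd v
    exact h7 (step v hv (by omega)).1
  obtain ⟨b, hba, hb⟩ : ∃ b, b ≠ a ∧ 7 ≤ dg G b := by
    by_contra hno
    push Not at hno
    have h1 := Finset.add_sum_erase Finset.univ (dg G) (Finset.mem_univ a)
    have h2 : ∑ v ∈ Finset.univ.erase a, dg G v ≤ ∑ v ∈ Finset.univ.erase a, 6 :=
      Finset.sum_le_sum (fun v hv => by have := hno v (Finset.ne_of_mem_erase hv); omega)
    have h3 := Finset.card_erase_add_one (Finset.mem_univ a)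
    rw [Finset.card_univ] at h3
    simp only [Finset.sum_const, smul_eq_mul] at h2
    omega
  have hb7 : dg G b = 7 := by
    have := low2 a b hba.symm
    omega
  have h6 : ∀ z, z ≠ a → z ≠ b → dg G z = 6 := by
    intro z h1 h2
    have := low3 a b z hba.symm h1.symm h2.symm
    have := hd z
    omega
  by_cases hab : G.Adj a b
  · obtain ⟨G', hle, ga, gb, gz, -⟩ := del_edge G hab
    refine hcon (minor_mono hle (reg_eleven G' hV (fun z => ?_)))
    by_cases h1 : z = a
    · subst h1; omega
    by_cases h2 : z = b
    · subst h2; omega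
    rw [gz z h1 h2, h6 z h1 h2]
  have hbn : b ∈ nn G a := mem_nn.mpr ⟨hba, hab⟩
  have h2 := Finset.card_erase_add_one hbn
  obtain ⟨p, q, hpq, he⟩ := Finset.card_eq_two.mp (show ((nn G a).erase b).card = 2 by omega)
  have hp : p ∈ (nn G a).erase b := by rw [he]; simp
  have hq : q ∈ (nn G a).erase b := by rw [he]; simp
  rw [Finset.mem_erase] at hp hq
  have p6 := h6 p (mem_nn.mp hp.2).1 hp.1
  have q6 := h6 q (mem_nn.mp hq.2).1 hq.1
  obtain ⟨-, r1, r2⟩ := step p hp.2 p6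
  have pq : G.Adj p q := by
    apply adj_of_not_nn hpq.symm
    intro h
    exact (mem_nn.mp hq.2).2 (r1 a (nn_symm hp.2) q h (mem_nn.mp hq.2).1)
  obtain ⟨u, hu, hub⟩ := Finset.exists_mem_ne (show 1 < (nb G p ∩ nb G q).card by
    have : 3 ≤ (nb G p ∩ nb G q).card := ht p q pq
    omega) b
  rw [Finset.mem_inter, mem_nb, mem_nb] at hu
  have hua : u ≠ a := by
    rintro rfl
    exact (mem_nn.mp hp.2).2 hu.1.symm
  have u6 := h6 u hua hub
  have hcn := r2 u hu.1
  rw [cn_symm] at hcn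
  have hs := sum_con G hu.1
  have hc5 := dg_con_common G pq hu.2.symm hu.1.ne
  have hc5 : dg (con G p u) q = 5 := by omega
  refine hcon (minor_con hu.1 (lemQ (con G p u) (Finset.univ.erase u)
    (con_supp (fun _ _ _ => Finset.mem_univ _) hu.1) ?_ (by omega) q ?_ hc5 ?_))
  · rw [Finset.card_erase_of_mem (Finset.mem_univ u), Finset.card_univ]
    omega
  · exact Finset.mem_erase.mpr ⟨hu.2.ne, Finset.mem_univ q⟩
  · have hb := sum_bound (nb (con G p u) q) (fun z => max (dg (con G p u) z) 6) p b 1 1 (by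
      intro z hz
      rw [mem_nb] at hz
      have hza : z ≠ a := by
        rintro rfl
        obtain ⟨-, -, -, h | h | h⟩ := hz
        · exact (mem_nn.mp hq.2).2 h.symm
        · exact hpq h.1.symm
        · exact (mem_nn.mp hp.2).1 h.1.symm
      by_cases hz : z = p
      · subst hz
        have := dg_con_self G hu.1 hu.1.ne
        simp
        omega
      · have := dg_con_le G hz hu.1.ne
        by_cases hzb : z = b
        · subst hzb
          simp [hz]
          omega
        · have := h6 z hza hzb
          simp [hz, hzb]
          omega)
    have : (nb (con G p u) q).card = 5 := hc5
    omega

lemma main (G : SimpleGraph V) (hV : Fintype.card V ≤ 11) [Nonempty V] (hd : ∀ v, 6 ≤ dg G v) :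
    G.HasCompleteMinor 6 := by
  obtain ⟨v⟩ := ‹Nonempty V›
  have h1 := card_nn G v
  have h2 := hd v
  have h3 : 6 * Fintype.card V ≤ ∑ v, dg G v := by
    have := Finset.card_nsmul_le_sum Finset.univ (fun v => dg G v) 6 (fun v _ => hd v)
    rw [smul_eq_mul, Finset.card_univ] at this
    omega
  have heq : ∑ v, dg G v = 6 * Fintype.card V → ∀ v, dg G v = 6 := by
    intro h v
    have hs : ∑ v : V, 6 = ∑ v, dg G v := by simp [h, mul_comm]
    rw [Finset.sum_eq_sum_iff_of_le (fun v _ => hd v)] at hs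
    exact (hs v (Finset.mem_univ v)).symm
  obtain ⟨e, he⟩ := even_sum G
  by_cases hbig : 8 * Fintype.card V ≤ ∑ v, dg G v + 18
  · exact mader _ (by omega) hV Finset.univ _ G Finset.card_univ
      (fun _ _ _ => Finset.mem_univ _) rfl hbig
  have hn : Fintype.card V = 10 ∨ Fintype.card V = 11 := by omega
  rcases hn with hn | hn
  · have hs : ∑ v, dg G v = 60 := by omega
    have hd6 := heq (by omega)
    by_contra hcon
    refine hcon (nn_ten G hn hd6 (fun x y hxy => ?_))
    by_contra hlt
    exact hcon (con_mader G 9 (by norm_num) (by norm_num) hn hxy (by omega))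
  · by_cases hs : ∑ v, dg G v = 66
    · exact reg_eleven G hn (heq (by omega))
    · exact ex_eleven G hn hd (by omega)

end counting

end K6

theorem order_le_11_minDegree6_hasK6Minor {V : Type*} [Fintype V] (G : SimpleGraph V)
    (hcard : Fintype.card V ≤ 11) (hdeg : 6 ≤ G.minDegree) :
    G.HasCompleteMinor 6 := by
  have hne : Nonempty V := by
    by_contra h
    rw [not_nonempty_iff] at h
    rw [SimpleGraph.minDegree_of_subsingleton] at hdeg
    omega
  refine K6.main G hcard (fun v => ?_)
  rw [K6.dg_eq_degree]
  have := G.minDegree_le_degree v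
  convert hdeg.trans this
end

section
/- For every integer t with 2 ≤ t ≤ 7 and every simple graph G of order n ≥ t−1 that contains no K_t minor, the number of edges of G is at most (t−2)·n − (t−1 choose 2). -/
attribute [local instance] Classical.propDecidable

namespace MaderK7

/-- neighbours of `a` in the finite set `X` -/
noncomputable def nb {V : Type*} (G : SimpleGraph V) (X : Finset V) (a : V) : Finset V :=
  X.filter (fun b => G.Adj a b)

lemma mem_nb {V : Type*} {G : SimpleGraph V} {X : Finset V} {a b : V} :
    b ∈ nb G X a ↔ b ∈ X ∧ G.Adj a b := by simp [nb]

/-- degree of `a` into the finite set `X` -/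
noncomputable def dg {V : Type*} (G : SimpleGraph V) (X : Finset V) (a : V) : ℕ :=
  (nb G X a).card

/-- twice the number of edges inside `X` -/
noncomputable def E {V : Type*} (G : SimpleGraph V) (X : Finset V) : ℕ := ∑ a ∈ X, dg G X a

/-- connectivity of a finite vertex set, in terms of cuts -/
def Conn {V : Type*} (G : SimpleGraph V) (X : Finset V) : Prop :=
  X.Nonempty ∧ ∀ Y ⊆ X, Y.Nonempty → (∀ a ∈ Y, ∀ b ∈ X, G.Adj a b → b ∈ Y) → Y = X

/-- a `K_7` minor inside the vertex set `A` -/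
def Mn {V : Type*} (G : SimpleGraph V) (A : Finset V) : Prop :=
  ∃ B : Fin 7 → Finset V, (∀ i, B i ⊆ A) ∧ (∀ i, Conn G (B i)) ∧
    (∀ i j, i ≠ j → Disjoint (B i) (B j)) ∧
    (∀ i j, i ≠ j → ∃ a ∈ B i, ∃ b ∈ B j, G.Adj a b)

/-- add a star from `u` to `Q` -/
def fill {V : Type*} (G : SimpleGraph V) (u : V) (Q : Finset V) : SimpleGraph V :=
  G ⊔ SimpleGraph.fromRel (fun a b => a = u ∧ b ∈ Q)

lemma fill_adj {V : Type*} {G : SimpleGraph V} {u : V} {Q : Finset V} {a b : V} :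
    (fill G u Q).Adj a b ↔ G.Adj a b ∨ (a ≠ b ∧ ((a = u ∧ b ∈ Q) ∨ (b = u ∧ a ∈ Q))) := by
  simp [fill]

lemma le_fill {V : Type*} (G : SimpleGraph V) (u : V) (Q : Finset V) : G ≤ fill G u Q :=
  le_sup_left

lemma dg_empty {V : Type*} (G : SimpleGraph V) (a : V) : dg G ∅ a = 0 := by simp [dg, nb]

lemma dg_insert {V : Type*} (G : SimpleGraph V) {X : Finset V} {x : V} (hx : x ∉ X) (a : V) :
    dg G (insert x X) a = dg G X a + if G.Adj a x then 1 else 0 := by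
  unfold dg nb
  rw [Finset.filter_insert]
  split_ifs with h
  · rw [Finset.card_insert_of_notMem (by simp [hx])]
  · simp

lemma dg_union {V : Type*} (G : SimpleGraph V) {X Y : Finset V} (h : Disjoint X Y) (a : V) :
    dg G (X ∪ Y) a = dg G X a + dg G Y a := by
  unfold dg nb
  rw [Finset.filter_union, Finset.card_union_of_disjoint]
  exact Finset.disjoint_filter_filter h

lemma dg_eq_sum {V : Type*} (G : SimpleGraph V) (X : Finset V) (a : V) :
    dg G X a = ∑ b ∈ X, if G.Adj a b then 1 else 0 := by
  unfold dg nb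
  rw [Finset.card_filter]

lemma dg_mono {V : Type*} {G G' : SimpleGraph V} (h : G ≤ G') {X Y : Finset V} (hXY : X ⊆ Y)
    (a : V) : dg G X a ≤ dg G' Y a := by
  apply Finset.card_le_card
  intro b hb
  rw [mem_nb] at hb ⊢
  exact ⟨hXY hb.1, h hb.2⟩

lemma sum_dg_comm {V : Type*} (G : SimpleGraph V) (X Y : Finset V) :
    ∑ a ∈ X, dg G Y a = ∑ b ∈ Y, dg G X b := by
  simp only [dg_eq_sum]
  rw [Finset.sum_comm]
  simp only [G.adj_comm]

lemma E_insert {V : Type*} (G : SimpleGraph V) {X : Finset V} {x : V} (hx : x ∉ X) :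
    E G (insert x X) = E G X + 2 * dg G X x := by
  unfold E
  rw [Finset.sum_insert hx]
  simp only [dg_insert G hx, Finset.sum_add_distrib]
  have : ∑ a ∈ X, (if G.Adj a x then 1 else 0) = dg G X x := by
    rw [dg_eq_sum]; simp only [G.adj_comm]
  rw [this]; simp; ring

lemma E_erase {V : Type*} (G : SimpleGraph V) {X : Finset V} {x : V} (hx : x ∈ X) :
    E G X = E G (X.erase x) + 2 * dg G X x := by
  have h := E_insert G (Finset.notMem_erase x X)
  have h2 := dg_insert G (Finset.notMem_erase x X) x
  rw [Finset.insert_erase hx] at h h2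
  simp at h2
  omega

lemma E_union {V : Type*} (G : SimpleGraph V) {X Y : Finset V} (h : Disjoint X Y) :
    E G (X ∪ Y) = E G X + E G Y + 2 * ∑ a ∈ X, dg G Y a := by
  have := sum_dg_comm G X Y
  unfold E
  rw [Finset.sum_union h]
  simp only [dg_union G h, Finset.sum_add_distrib]
  omega

lemma E_even {V : Type*} (G : SimpleGraph V) (X : Finset V) : 2 ∣ E G X := by
  induction X using Finset.induction_on with
  | empty => simp [E]
  | insert x X hx ih => rw [E_insert G hx]; omega

lemma E_mono {V : Type*} {G G' : SimpleGraph V} (h : G ≤ G') (X : Finset V) :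
    E G X ≤ E G' X := Finset.sum_le_sum fun a _ => dg_mono h (le_refl X) a

lemma dg_compl {V : Type*} (G : SimpleGraph V) {X : Finset V} {a : V} (ha : a ∈ X) :
    dg G X a + dg Gᶜ X a + 1 = X.card := by
  have h1 : X.card = (X.erase a).card + 1 := by
    rw [Finset.card_erase_of_mem ha]; have := Finset.card_pos.mpr ⟨a, ha⟩; omega
  have h2 := Finset.card_filter_add_card_filter_not (s := X.erase a) (fun b => G.Adj a b)
  have h3 : (X.erase a).filter (fun b => G.Adj a b) = nb G X a := by
    ext b; simp only [mem_nb, Finset.mem_filter, Finset.mem_erase]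
    constructor
    · tauto
    · intro h; exact ⟨⟨h.2.ne', h.1⟩, h.2⟩
  have h4 : (X.erase a).filter (fun b => ¬ G.Adj a b) = nb Gᶜ X a := by
    ext b; simp only [mem_nb, Finset.mem_filter, Finset.mem_erase, SimpleGraph.compl_adj]
    constructor
    · rintro ⟨⟨h1, h2⟩, h3⟩; exact ⟨h2, h1.symm, h3⟩
    · rintro ⟨h2, h1, h3⟩; exact ⟨⟨h1.symm, h2⟩, h3⟩
  rw [h3, h4] at h2
  unfold dg; omega

lemma E_compl {V : Type*} (G : SimpleGraph V) (X : Finset V) :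
    E G X + E Gᶜ X + X.card = X.card * X.card := by
  have : ∑ a ∈ X, (dg G X a + dg Gᶜ X a + 1) = ∑ a ∈ X, X.card :=
    Finset.sum_congr rfl fun a ha => dg_compl G ha
  simp only [Finset.sum_add_distrib, Finset.sum_const, smul_eq_mul, mul_one] at this
  exact this

lemma E_fill {V : Type*} (G : SimpleGraph V) {u : V} {X Q F : Finset V} (hu : u ∈ X)
    (hFX : F ⊆ X) (hFQ : F ⊆ Q) (hF : ∀ y ∈ F, Gᶜ.Adj u y) :
    E G X + 2 * F.card ≤ E (fill G u Q) X := by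
  rw [E_erase G hu, E_erase (fill G u Q) hu]
  have h1 := E_mono (le_fill G u Q) (X.erase u)
  have h2 : dg G X u + F.card ≤ dg (fill G u Q) X u := by
    unfold dg
    rw [← Finset.card_union_of_disjoint]
    · apply Finset.card_le_card
      intro b hb
      simp only [Finset.mem_union, mem_nb] at hb ⊢
      rcases hb with hb | hb
      · exact ⟨hb.1, le_fill G u Q hb.2⟩
      · exact ⟨hFX hb, fill_adj.2 (Or.inr ⟨(hF b hb).ne, Or.inl ⟨rfl, hFQ hb⟩⟩)⟩
    · rw [Finset.disjoint_left]
      intro b hb hb'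
      have := hF b hb'
      rw [SimpleGraph.compl_adj] at this
      exact this.2 (mem_nb.1 hb).2
  omega

lemma Conn.mono {V : Type*} {G G' : SimpleGraph V} (h : G ≤ G') {X : Finset V}
    (hX : Conn G X) : Conn G' X :=
  ⟨hX.1, fun Y hY hne hc => hX.2 Y hY hne fun a ha b hb hab => hc a ha b hb (h hab)⟩

lemma conn_singleton {V : Type*} (G : SimpleGraph V) (x : V) : Conn G {x} := by
  refine ⟨Finset.singleton_nonempty x, fun Y hY hne _ => ?_⟩
  exact (Finset.subset_singleton_iff.1 hY).resolve_left hne.ne_empty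

lemma Mn.mono {V : Type*} {G G' : SimpleGraph V} (h : G ≤ G') {A A' : Finset V} (hA : A ⊆ A')
    (hM : Mn G A) : Mn G' A' := by
  obtain ⟨B, h1, h2, h3, h4⟩ := hM
  refine ⟨B, fun i => (h1 i).trans hA, fun i => (h2 i).mono h, h3, fun i j hij => ?_⟩
  obtain ⟨a, ha, b, hb, hab⟩ := h4 i j hij
  exact ⟨a, ha, b, hb, h hab⟩

/-- lifting minors through a family of branch sets -/
lemma Mn.lift {V : Type*} {G G' : SimpleGraph V} {A A' : Finset V} (β : V → Finset V)
    (hA : ∀ a ∈ A', β a ⊆ A) (hc : ∀ a ∈ A', Conn G (β a))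
    (hd : ∀ a ∈ A', ∀ b ∈ A', a ≠ b → Disjoint (β a) (β b))
    (he : ∀ a ∈ A', ∀ b ∈ A', G'.Adj a b → ∃ x ∈ β a, ∃ y ∈ β b, G.Adj x y)
    (hM : Mn G' A') : Mn G A := by
  obtain ⟨B, h1, h2, h3, h4⟩ := hM
  refine ⟨fun i => (B i).biUnion β, fun i => ?_, fun i => ?_, fun i j hij => ?_, fun i j hij => ?_⟩
  · exact Finset.biUnion_subset.2 fun a ha => hA a (h1 i ha)
  · obtain ⟨a0, ha0⟩ := (h2 i).1
    obtain ⟨x0, hx0⟩ := (hc a0 (h1 i ha0)).1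
    refine ⟨⟨x0, Finset.mem_biUnion.2 ⟨a0, ha0, hx0⟩⟩, fun Y hY hne hcl => ?_⟩
    have key : ∀ a ∈ B i, ∀ y ∈ β a, y ∈ Y → β a ⊆ Y := by
      intro a ha y hy hyY
      have := (hc a (h1 i ha)).2 (β a ∩ Y) Finset.inter_subset_left
        ⟨y, Finset.mem_inter.2 ⟨hy, hyY⟩⟩ (by
          intro p hp q hq hpq
          rw [Finset.mem_inter] at hp ⊢
          exact ⟨hq, hcl p hp.2 q (Finset.mem_biUnion.2 ⟨a, ha, hq⟩) hpq⟩)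
      rw [← this]; exact Finset.inter_subset_right
    have hZ := (h2 i).2 ((B i).filter (fun a => β a ⊆ Y)) (Finset.filter_subset _ _) (by
        obtain ⟨y, hy⟩ := hne
        obtain ⟨a, ha, hya⟩ := Finset.mem_biUnion.1 (hY hy)
        exact ⟨a, Finset.mem_filter.2 ⟨ha, key a ha y hya hy⟩⟩) (by
        intro a ha b hb hab
        rw [Finset.mem_filter] at ha ⊢
        obtain ⟨x, hx, y, hy, hxy⟩ := he a (h1 i ha.1) b (h1 i hb) hab
        exact ⟨hb, key b hb y hy (hcl x (ha.2 hx) y (Finset.mem_biUnion.2 ⟨b, hb, hy⟩) hxy)⟩)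
    apply Finset.Subset.antisymm hY
    apply Finset.biUnion_subset.2
    intro a ha
    rw [← hZ] at ha
    exact (Finset.mem_filter.1 ha).2
  · rw [Finset.disjoint_biUnion_left]
    intro a ha
    rw [Finset.disjoint_biUnion_right]
    intro b hb
    refine hd a (h1 i ha) b (h1 j hb) ?_
    rintro rfl
    exact Finset.disjoint_left.1 (h3 i j hij) ha hb
  · obtain ⟨a, ha, b, hb, hab⟩ := h4 i j hij
    obtain ⟨x, hx, y, hy, hxy⟩ := he a (h1 i ha) b (h1 j hb) hab
    exact ⟨x, Finset.mem_biUnion.2 ⟨a, ha, hx⟩, y, Finset.mem_biUnion.2 ⟨b, hb, hy⟩, hxy⟩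

lemma conn_insert {V : Type*} {G : SimpleGraph V} {X : Finset V} {u : V} (hX : Conn G X)
    (hu : ∃ x ∈ X, G.Adj u x) : Conn G (insert u X) := by
  refine ⟨⟨u, Finset.mem_insert_self u X⟩, fun Y hY hne hcl => ?_⟩
  obtain ⟨x, hx, hux⟩ := hu
  have key : (∃ y ∈ X, y ∈ Y) → X ⊆ Y := by
    rintro ⟨y, hy, hyY⟩
    have := hX.2 (X ∩ Y) Finset.inter_subset_left ⟨y, Finset.mem_inter.2 ⟨hy, hyY⟩⟩ (by
      intro p hp q hq hpq
      rw [Finset.mem_inter] at hp ⊢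
      exact ⟨hq, hcl p hp.2 q (Finset.mem_insert_of_mem hq) hpq⟩)
    rw [← this]; exact Finset.inter_subset_right
  have hXY : X ⊆ Y := by
    obtain ⟨y, hy⟩ := hne
    rcases Finset.mem_insert.1 (hY hy) with rfl | h
    · exact key ⟨x, hx, hcl y hy x (Finset.mem_insert_of_mem hx) hux⟩
    · exact key ⟨y, h, hy⟩
  apply Finset.Subset.antisymm hY
  apply Finset.insert_subset _ hXY
  exact hcl x (hXY hx) u (Finset.mem_insert_self u X) hux.symm

/-- contracting the connected set `X` onto `u` -/
lemma Mn.of_fill {V : Type*} {G : SimpleGraph V} {A X Q : Finset V} {u : V}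
    (hX : Conn G X) (hd : Disjoint A X) (hu : ∃ x ∈ X, G.Adj u x)
    (hQ : ∀ q ∈ Q, ∃ x ∈ X, G.Adj q x) (hM : Mn (fill G u Q) A) : Mn G (A ∪ X) := by
  refine hM.lift (fun a => if a = u then insert u X else {a}) ?_ ?_ ?_ ?_
  · intro a ha
    split_ifs with h
    · subst h
      exact Finset.insert_subset (Finset.mem_union_left _ ha) Finset.subset_union_right
    · exact Finset.singleton_subset_iff.2 (Finset.mem_union_left _ ha)
  · intro a ha
    split_ifs with h
    · exact conn_insert hX hu
    · exact conn_singleton G a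
  · intro a ha b hb hab
    have ha' := Finset.disjoint_left.1 hd ha
    have hb' := Finset.disjoint_left.1 hd hb
    split_ifs with h1 h2 h2
    · exact absurd (h1.trans h2.symm) hab
    · rw [Finset.disjoint_singleton_right]; simp [h2, hb']
    · rw [Finset.disjoint_singleton_left]; simp [h1, ha']
    · simpa using hab
  · intro a ha b hb hab
    have hself : ∀ c, c ∈ (if c = u then insert u X else {c} : Finset V) := by
      intro c; split_ifs with h <;> simp [h]
    have hXu : ∀ x ∈ X, x ∈ (if u = u then insert u X else {u} : Finset V) := by
      intro x hx; simp [hx]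
    rcases fill_adj.1 hab with h | ⟨hne, ⟨rfl, h⟩ | ⟨rfl, h⟩⟩
    · exact ⟨a, hself a, b, hself b, h⟩
    · obtain ⟨x, hx, hbx⟩ := hQ b h
      exact ⟨x, hXu x hx, b, hself b, hbx.symm⟩
    · obtain ⟨x, hx, hbx⟩ := hQ a h
      exact ⟨a, hself a, x, hXu x hx, hbx⟩

lemma Mn.of_clique {V : Type*} {G : SimpleGraph V} {A : Finset V} (hA : 7 ≤ A.card)
    (h : ∀ a ∈ A, ∀ b ∈ A, a ≠ b → G.Adj a b) : Mn G A := by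
  obtain ⟨A', hA', hc⟩ := Finset.exists_subset_card_eq hA
  let f := A'.equivFinOfCardEq hc
  have hmem : ∀ i, (f.symm i : V) ∈ A := fun i => hA' (f.symm i).2
  have hne : ∀ i j, i ≠ j → (f.symm i : V) ≠ f.symm j := by
    intro i j hij h
    exact hij (f.symm.injective (Subtype.ext h))
  refine ⟨fun i => {(f.symm i : V)}, fun i => ?_, fun i => conn_singleton G _, fun i j hij => ?_,
    fun i j hij => ⟨_, Finset.mem_singleton_self _, _, Finset.mem_singleton_self _, ?_⟩⟩
  · exact Finset.singleton_subset_iff.2 (hmem i)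
  · simpa using hne i j hij
  · exact h _ (hmem i) _ (hmem j) (hne i j hij)

/-- edge count after contracting `b` onto `a` -/
lemma E_contract {V : Type*} (G : SimpleGraph V) {X : Finset V} {a b : V} (ha : a ∈ X) (hb : b ∈ X)
    (hab : G.Adj a b) :
    E G X ≤ E (fill G a (nb G X b)) (X.erase b) + 2
      + 2 * (X.filter (fun y => G.Adj a y ∧ G.Adj b y)).card := by
  have h1 := E_fill G (u := a) (X := X.erase b) (Q := nb G X b)
    (F := (X.filter (fun y => G.Adj b y ∧ Gᶜ.Adj a y))) (Finset.mem_erase.2 ⟨hab.ne, ha⟩)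
    (by intro y hy; rw [Finset.mem_filter] at hy; exact Finset.mem_erase.2 ⟨hy.2.1.ne', hy.1⟩)
    (by intro y hy; rw [Finset.mem_filter] at hy; exact mem_nb.2 ⟨hy.1, hy.2.1⟩)
    (by intro y hy; rw [Finset.mem_filter] at hy; exact hy.2.2)
  have h2 := E_erase G hb
  have h3 : dg G X b ≤ (X.filter (fun y => G.Adj b y ∧ Gᶜ.Adj a y)).card +
      (X.filter (fun y => G.Adj a y ∧ G.Adj b y)).card + 1 := by
    have : nb G X b ⊆ (X.filter (fun y => G.Adj b y ∧ Gᶜ.Adj a y)) ∪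
      (X.filter (fun y => G.Adj a y ∧ G.Adj b y)) ∪ {a} := by
      intro y hy
      simp only [Finset.mem_union, mem_nb, Finset.mem_filter, Finset.mem_singleton,
        SimpleGraph.compl_adj] at hy ⊢
      by_cases h : a = y
      · right; exact h.symm
      · tauto
    refine (Finset.card_le_card this).trans ?_
    refine (Finset.card_union_le _ _).trans ?_
    have := Finset.card_union_le (X.filter (fun y => G.Adj b y ∧ Gᶜ.Adj a y))
      (X.filter (fun y => G.Adj a y ∧ G.Adj b y))
    simp only [Finset.card_singleton]
    omega
  omega

lemma Mn.of_contract {V : Type*} {G : SimpleGraph V} {X : Finset V} {a b : V} (hb : b ∈ X)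
    (hab : G.Adj a b) (hM : Mn (fill G a (nb G X b)) (X.erase b)) :
    Mn G X := by
  have := Mn.of_fill (X := {b}) (conn_singleton G b) (by simp) ⟨b, by simp, hab⟩ (by
    intro q hq; exact ⟨b, by simp, (mem_nb.1 hq).2.symm⟩) hM
  refine this.mono le_rfl ?_
  intro y hy
  rcases Finset.mem_union.1 hy with h | h
  · exact Finset.mem_of_mem_erase h
  · rw [Finset.mem_singleton] at h; rw [h]; exact hb


lemma E_sdiff {V : Type*} (C : SimpleGraph V) {S Z : Finset V} (hZ : Z ⊆ S) :
    E C S ≤ E C (S \ Z) + 2 * ∑ z ∈ Z, dg C S z := by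
  have hd : Disjoint Z (S \ Z) := Finset.disjoint_sdiff
  have h1 := E_union C hd
  rw [Finset.union_sdiff_of_subset hZ] at h1
  have h2 : ∑ z ∈ Z, dg C S z = E C Z + ∑ z ∈ Z, dg C (S \ Z) z := by
    unfold E
    rw [← Finset.sum_add_distrib]
    refine Finset.sum_congr rfl fun z _ => ?_
    have := dg_union C hd z
    rwa [Finset.union_sdiff_of_subset hZ] at this
  omega

/-- the arithmetic heart of the separation argument -/
lemma comb {V : Type*} (C : SimpleGraph V) (S T : Finset V) (hT : T ⊆ S)
    (h3 : ∀ x ∈ S, dg C S x ≤ 3)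
    (I0 : S.card * S.card + 32 ≤ 11 * S.card + E C S)
    (I1 : ∀ u' ∈ S, ∀ u ∈ S,
      S.card * S.card + 32 + 2 * dg C S u' + 2 * dg C S u ≤ 11 * S.card + E C S)
    (I2 : ∀ u' ∈ S, ∀ u ∈ S, ∀ x ∈ S, x ∉ T → x ≠ u →
      S.card * S.card + 32 + 2 * dg C S u' + 2 * dg C S u + 2 * dg C (S \ (insert u T)) x
        ≤ 11 * S.card + E C S)
    (hs : S.card ≤ 8)
    (hT1 : ∀ t ∈ T, 1 ≤ dg C S t) (hT2 : ∀ t ∈ T, dg C S t ≤ 2)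
    (h6 : S.card ≤ 6 → T.card ≤ 1)
    (h7 : S.card = 7 → T.card ≤ 3 ∧ 2 * T.card + E C S ≤ 21 ∧
      (T.card ≤ 2 ∨ ∀ t ∈ T, dg C S t ≤ 1))
    (h8 : S.card = 8 → T.card ≤ 3) : False := by
  have hSne : S.Nonempty := by
    rw [Finset.nonempty_iff_ne_empty]; rintro rfl; simp [E] at I0
  obtain ⟨w, hwS, hw⟩ := Finset.exists_max_image S (fun x => dg C S x) hSne
  obtain ⟨e, he⟩ := E_even C S
  have hEub : E C S ≤ S.card * dg C S w := by
    have := Finset.sum_le_card_nsmul S (fun x => dg C S x) (dg C S w) hw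
    simpa [E] using this
  have hTdef : T.card + E C S ≤ 3 * S.card := by
    have h1 : E C S = ∑ x ∈ S \ T, dg C S x + ∑ x ∈ T, dg C S x := (Finset.sum_sdiff hT).symm
    have h2 : ∑ x ∈ S \ T, dg C S x ≤ (S \ T).card * 3 := by
      simpa using Finset.sum_le_card_nsmul (S \ T) (fun x => dg C S x) 3
        (fun x hx => h3 x (Finset.mem_sdiff.1 hx).1)
    have h3 : ∑ x ∈ T, dg C S x ≤ T.card * 2 := by
      simpa using Finset.sum_le_card_nsmul T (fun x => dg C S x) 2 hT2
    have h4 := Finset.card_sdiff_add_card_eq_card hT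
    omega
  -- the main counting inequality
  have main : ∀ u ∈ S, dg C S u = dg C S w →
      2 * (E C (S \ insert u T)) + (S \ insert u T).card * (S.card * S.card + 32 + 4 * dg C S w)
        ≤ (S \ insert u T).card * (11 * S.card + E C S) := by
    intro u hu huw
    have := Finset.sum_le_card_nsmul (S \ insert u T)
      (fun x => 2 * dg C (S \ insert u T) x + (S.card * S.card + 32 + 4 * dg C S w))
      (11 * S.card + E C S) (by
        intro x hx
        simp only [Finset.mem_sdiff, Finset.mem_insert, not_or] at hx
        have := I2 w hwS u hu x hx.1 hx.2.2 hx.2.1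
        omega)
    simpa [E, Finset.sum_add_distrib, ← Finset.mul_sum] using this
  have hI1 := I1 w hwS w hwS
  have h3w := h3 w hwS
  by_cases hcase : ∃ t ∈ T, dg C S t = dg C S w
  · obtain ⟨u, huT, huw⟩ := hcase
    have hm := main u (hT huT) huw
    have hE := E_sdiff C (S := S) (Z := insert u T) (Finset.insert_subset (hT huT) hT)
    rw [Finset.insert_eq_of_mem huT] at hm hE
    have hc := Finset.card_sdiff_add_card_eq_card hT
    have hsum : ∑ z ∈ T, dg C S z ≤ T.card * dg C S w := by
      simpa using Finset.sum_le_card_nsmul T (fun x => dg C S x) _ (fun x hx => hw x (hT hx))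
    have hw2 := hT2 u huT
    have hw1 := hT1 u huT
    have hTpos : 1 ≤ T.card := Finset.card_pos.2 ⟨u, huT⟩
    have h7' : S.card = 7 → T.card ≤ 2 ∨ dg C S w ≤ 1 := by
      intro h
      rcases (h7 h).2.2 with h | h
      · exact Or.inl h
      · right; rw [← huw]; exact h u huT
    have h7'' : S.card = 7 → T.card ≤ 3 := fun h => (h7 h).1
    rw [huw] at hw1 hw2
    clear main I2 I1 h3 hw hT1 hT2 hT h7 huw
    generalize dg C S w = D at *
    generalize S.card = s at *
    generalize hτ : T.card = τ at *
    generalize ∑ z ∈ T, dg C S z = q at *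
    generalize E C (S \ T) = ER at *
    generalize (S \ T).card = r at *
    generalize E C S = e2 at *
    subst he
    have hτ3 : τ ≤ 3 := by omega
    interval_cases s <;> interval_cases D <;> first | omega | skip
    all_goals (interval_cases τ <;> first | omega | skip)
    all_goals (obtain rfl := Nat.eq_sub_of_add_eq hc; simp at hm; omega)
  · push Not at hcase
    have hwT : w ∉ T := fun h => hcase w h rfl
    have hm := main w hwS rfl
    have hE := E_sdiff C (S := S) (Z := insert w T) (Finset.insert_subset hwS hT)
    have hc := Finset.card_sdiff_add_card_eq_card (Finset.insert_subset hwS hT)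
    rw [Finset.sum_insert hwT] at hE
    rw [Finset.card_insert_of_notMem hwT] at hc
    have hsum : ∑ z ∈ T, dg C S z ≤ T.card * (dg C S w - 1) := by
      simpa using Finset.sum_le_card_nsmul T (fun x => dg C S x) _ (fun x hx => by
        have := hw x (hT hx)
        have := hcase x hx
        omega)
    have hsum1 : T.card ≤ ∑ z ∈ T, dg C S z := by
      simpa using Finset.card_nsmul_le_sum T (fun x => dg C S x) 1 (fun x hx => hT1 x hx)
    have h7'' : S.card = 7 → T.card ≤ 3 ∧ 2 * T.card + E C S ≤ 21 ∧
      (T.card ≤ 2 ∨ ∑ z ∈ T, dg C S z ≤ T.card) := fun h => ⟨(h7 h).1, (h7 h).2.1,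
        (h7 h).2.2.imp id (fun h => by
          simpa using Finset.sum_le_card_nsmul T (fun x => dg C S x) 1 h)⟩
    clear main I2 I1 h3 hw hT1 hT2 hT h7 hcase
    generalize dg C S w = D at *
    generalize S.card = s at *
    generalize hτ : T.card = τ at *
    generalize ∑ z ∈ T, dg C S z = q at *
    generalize E C (S \ insert w T) = ER at *
    generalize (S \ insert w T).card = r at *
    generalize E C S = e2 at *
    subst he
    have hτ3 : τ ≤ 3 := by omega
    interval_cases s <;> interval_cases D <;> first | omega | skip
    all_goals (interval_cases τ <;> first | omega | skip)
    all_goals (obtain rfl := Nat.eq_sub_of_add_eq hc; simp at hm; omega)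


/-- the induction hypothesis -/
def IH (V : Type*) (k : ℕ) : Prop := ∀ (G : SimpleGraph V) (A : Finset V),
  6 ≤ A.card → A.card < k → ¬ Mn G A → E G A + 30 ≤ 10 * A.card

lemma sep_count {V : Type*} (G : SimpleGraph V) {A K S : Finset V} (hK : K ⊆ A) (hS : S ⊆ A)
    (hd : Disjoint K S) (hcl : ∀ a ∈ K, ∀ b ∈ A, G.Adj a b → b ∈ K ∪ S) :
    E G A + E G S = E G (K ∪ S) + E G (A \ K) := by
  have h1 := E_union G (Finset.disjoint_sdiff (s := K) (t := A))
  rw [Finset.union_sdiff_of_subset hK] at h1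
  have h2 := E_union G hd
  have h3 : ∑ a ∈ K, dg G (A \ K) a = ∑ a ∈ K, dg G S a := by
    refine Finset.sum_congr rfl fun a ha => ?_
    unfold dg
    congr 1
    ext b
    simp only [mem_nb, Finset.mem_sdiff]
    constructor
    · rintro ⟨⟨hb, hbK⟩, hab⟩
      exact ⟨(Finset.mem_union.1 (hcl a ha b hb hab)).resolve_left hbK, hab⟩
    · rintro ⟨hb, hab⟩
      exact ⟨⟨hS hb, fun h => Finset.disjoint_left.1 hd h hb⟩, hab⟩
  omega

lemma sepA {V : Type*} {G : SimpleGraph V} {A K S : Finset V} (ih : IH V A.card)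
    (hM : ¬ Mn G A) (hK : K ⊆ A) (hS : S ⊆ A) (hd : Disjoint K S) (hKc : Conn G K)
    (hSK : ∀ y ∈ S, ∃ x ∈ K, G.Adj y x) (h6 : 6 ≤ (A \ K).card) {u : V} (hu : u ∈ S) :
    E G (A \ K) + 2 * dg Gᶜ S u + 30 ≤ 10 * (A \ K).card := by
  have hSA : S ⊆ A \ K := fun y hy =>
    Finset.mem_sdiff.2 ⟨hS hy, fun h => Finset.disjoint_left.1 hd h hy⟩
  have hlt : (A \ K).card < A.card := by
    have := Finset.card_sdiff_add_card_eq_card hK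
    have := Finset.card_pos.2 hKc.1
    omega
  have h1 := ih (fill G u S) (A \ K) h6 hlt (fun h => hM (by
    have := Mn.of_fill hKc Finset.sdiff_disjoint (hSK u hu) hSK h
    rwa [Finset.sdiff_union_of_subset hK] at this))
  have h2 := E_fill G (u := u) (X := A \ K) (Q := S) (F := nb Gᶜ S u) (hSA hu)
    (fun y hy => hSA (mem_nb.1 hy).1) (fun y hy => (mem_nb.1 hy).1) (fun y hy => (mem_nb.1 hy).2)
  unfold dg
  omega

lemma sepB1 {V : Type*} {G : SimpleGraph V} {A K S : Finset V} {v : V} (ih : IH V A.card)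
    (hM : ¬ Mn G A) (hK : K ⊆ A) (hS : S ⊆ A) (hv : v ∈ A) (hvK : v ∉ K) (hvS : v ∉ S)
    (hvadj : ∀ y ∈ S, G.Adj v y) (h6 : 6 ≤ (K ∪ S).card) {u : V} (hu : u ∈ S) :
    E G (K ∪ S) + 2 * dg Gᶜ S u + 30 ≤ 10 * (K ∪ S).card := by
  have hvKS : v ∉ K ∪ S := by simp [hvK, hvS]
  have hlt : (K ∪ S).card < A.card := Finset.card_lt_card
    ⟨Finset.union_subset hK hS, fun h => hvKS (h hv)⟩
  have h1 := ih (fill G u S) (K ∪ S) h6 hlt (fun h => hM (by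
    have := Mn.of_fill (conn_singleton G v) (by simpa using hvKS)
      ⟨v, by simp, (hvadj u hu).symm⟩ (fun q hq => ⟨v, by simp, (hvadj q hq).symm⟩) h
    refine this.mono le_rfl (Finset.union_subset (Finset.union_subset hK hS) (by simpa using hv))))
  have h2 := E_fill G (u := u) (X := K ∪ S) (Q := S) (F := nb Gᶜ S u)
    (Finset.mem_union_right _ hu)
    (fun y hy => Finset.mem_union_right _ (mem_nb.1 hy).1)
    (fun y hy => (mem_nb.1 hy).1) (fun y hy => (mem_nb.1 hy).2)
  unfold dg
  omega

lemma sepB2 {V : Type*} {G : SimpleGraph V} {A K S X F : Finset V} {v : V} (ih : IH V A.card)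
    (hM : ¬ Mn G A) (hK : K ⊆ A) (hS : S ⊆ A) (hv : v ∈ A) (hvK : v ∉ K) (hvS : v ∉ S)
    (hvadj : ∀ y ∈ S, G.Adj v y) (h6 : 6 ≤ (K ∪ S).card) {u x : V} (hu : u ∈ S)
    (hx : x ∈ S) (hxu : x ≠ u) (hX : Conn G X) (hXA : X ⊆ A) (hXd : Disjoint (K ∪ S) X)
    (hvX : v ∉ X) (hxX : ∃ p ∈ X, G.Adj x p) (hFS : F ⊆ S) (huF : u ∉ F)
    (hFx : ∀ y ∈ F, Gᶜ.Adj x y) (hFX : ∀ y ∈ F, ∃ p ∈ X, G.Adj y p) :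
    E G (K ∪ S) + 2 * dg Gᶜ S u + 2 * F.card + 30 ≤ 10 * (K ∪ S).card := by
  have hvKS : v ∉ K ∪ S := by simp [hvK, hvS]
  have hlt : (K ∪ S).card < A.card := Finset.card_lt_card
    ⟨Finset.union_subset hK hS, fun h => hvKS (h hv)⟩
  have hle := le_fill G u S
  have h1 := ih (fill (fill G u S) x F) (K ∪ S) h6 hlt (fun h => hM (by
    have h0 := Mn.of_fill (hX.mono hle) hXd (by
      obtain ⟨p, hp, hxp⟩ := hxX; exact ⟨p, hp, hle hxp⟩) (fun q hq => by
      obtain ⟨p, hp, hxp⟩ := hFX q hq; exact ⟨p, hp, hle hxp⟩) h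
    have := Mn.of_fill (conn_singleton G v) (by simp [hvK, hvS, hvX])
      ⟨v, by simp, (hvadj u hu).symm⟩ (fun q hq => ⟨v, by simp, (hvadj q hq).symm⟩) h0
    refine this.mono le_rfl (Finset.union_subset (Finset.union_subset
      (Finset.union_subset hK hS) hXA) (by simpa using hv))))
  have h2 := E_fill G (u := u) (X := K ∪ S) (Q := S) (F := nb Gᶜ S u)
    (Finset.mem_union_right _ hu)
    (fun y hy => Finset.mem_union_right _ (mem_nb.1 hy).1)
    (fun y hy => (mem_nb.1 hy).1) (fun y hy => (mem_nb.1 hy).2)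
  have h3 := E_fill (fill G u S) (u := x) (X := K ∪ S) (Q := F) (F := F)
    (Finset.mem_union_right _ hx) (fun y hy => Finset.mem_union_right _ (hFS hy))
    (fun y hy => hy) (fun y hy => by
      have := hFx y hy
      rw [SimpleGraph.compl_adj] at this ⊢
      refine ⟨this.1, fun h => ?_⟩
      rcases fill_adj.1 h with h | ⟨_, ⟨h, _⟩ | ⟨h, _⟩⟩
      · exact this.2 h
      · exact hxu h
      · exact huF (h ▸ hy))
  unfold dg
  omega



lemma sum_dg_le {V : Type*} (C : SimpleGraph V) (X Y : Finset V) (c : ℕ)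
    (h : ∀ x ∈ X, dg C Y x ≤ c) : ∑ x ∈ X, dg C Y x ≤ X.card * c := by
  simpa using Finset.sum_le_card_nsmul X (fun x => dg C Y x) c h

/-- choice of the helper set -/
lemma helper {V : Type*} (G : SimpleGraph V) {S W : Finset V} (hd : Disjoint S W)
    (hW : W.Nonempty) (h9 : S.card + W.card ≤ 9) (h5 : 5 ≤ S.card)
    (hS : ∀ x ∈ S, dg Gᶜ S x + dg Gᶜ W x + 6 ≤ S.card + W.card)
    (hWd : ∀ x ∈ W, dg Gᶜ S x + dg Gᶜ W x + 6 ≤ S.card + W.card) :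
    ∃ X ⊆ W, Conn G X ∧ ∀ T : Finset V,
      T = S.filter (fun y => (∀ p ∈ X, ¬ G.Adj y p) ∧ 1 ≤ dg Gᶜ S y) →
      (∀ t ∈ T, dg Gᶜ S t ≤ 2) ∧ (S.card ≤ 6 → T.card ≤ 1) ∧
      (S.card = 7 → T.card ≤ 3 ∧ 2 * T.card + E Gᶜ S ≤ 21 ∧
        (T.card ≤ 2 ∨ ∀ t ∈ T, dg Gᶜ S t ≤ 1)) ∧
      (S.card = 8 → T.card ≤ 3) := by
  have hW1 := Finset.card_pos.2 hW
  have hCadj : ∀ y ∈ S, ∀ p ∈ W, ¬ G.Adj y p → Gᶜ.Adj y p := by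
    intro y hy p hp h
    rw [SimpleGraph.compl_adj]
    refine ⟨?_, h⟩
    rintro rfl
    exact Finset.disjoint_left.1 hd hy hp
  by_cases hc : Conn G W
  · refine ⟨W, le_rfl, hc, ?_⟩
    rintro T rfl
    set T := S.filter (fun y => (∀ p ∈ W, ¬ G.Adj y p) ∧ 1 ≤ dg Gᶜ S y) with hT
    have hTS : T ⊆ S := Finset.filter_subset _ _
    have ht : ∀ t ∈ T, dg Gᶜ S t + 6 ≤ S.card ∧ 1 ≤ dg Gᶜ S t := by
      intro t ht
      rw [hT, Finset.mem_filter] at ht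
      have h1 : dg Gᶜ W t = W.card := by
        unfold dg
        congr 1
        ext p
        rw [mem_nb]
        exact ⟨fun h => h.1, fun h => ⟨h, hCadj t ht.1 p h (ht.2.1 p h)⟩⟩
      have := hS t ht.1
      exact ⟨by omega, ht.2.2⟩
    have hcard : T.card ≤ 3 := by
      obtain ⟨p, hp⟩ := hW
      have h1 : T.card ≤ dg Gᶜ S p := by
        apply Finset.card_le_card
        intro t ht
        rw [mem_nb]
        refine ⟨hTS ht, ?_⟩
        rw [hT, Finset.mem_filter] at ht
        exact (hCadj t ht.1 p hp (ht.2.1 p hp)).symm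
      have := hWd p hp
      omega
    refine ⟨fun t h => ?_, fun h6 => ?_, fun h7 => ⟨hcard, ?_, Or.inr fun t h => ?_⟩,
      fun _ => hcard⟩
    · have := ht t h; omega
    · rw [Finset.card_eq_zero.2]
      · omega
      · rw [Finset.eq_empty_iff_forall_notMem]
        intro t h
        have := ht t h; omega
    · have h1 : E Gᶜ S = ∑ x ∈ S \ T, dg Gᶜ S x + ∑ x ∈ T, dg Gᶜ S x :=
        (Finset.sum_sdiff hTS).symm
      have h2 := sum_dg_le Gᶜ (S \ T) S 3 (fun x hx => by
        have := hS x (Finset.mem_sdiff.1 hx).1; omega)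
      have h3 := sum_dg_le Gᶜ T S 1 (fun x hx => by
        have := ht x hx; omega)
      have h4 := Finset.card_sdiff_add_card_eq_card hTS
      omega
    · have := ht t h; omega
  · obtain ⟨Y, hYW, hYne, hYcl, hYneW⟩ : ∃ Y ⊆ W, Y.Nonempty ∧
        (∀ a ∈ Y, ∀ b ∈ W, G.Adj a b → b ∈ Y) ∧ Y ≠ W := by
      unfold Conn at hc
      push Not at hc
      obtain ⟨Y, h1, h2, h3, h4⟩ := hc hW
      exact ⟨Y, h1, h2, h3, h4⟩
    have hEW : 2 * (W.card - 1) ≤ E Gᶜ W := by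
      have h1 := E_union Gᶜ (Finset.disjoint_sdiff (s := Y) (t := W))
      rw [Finset.union_sdiff_of_subset hYW] at h1
      have h2 : ∑ a ∈ Y, dg Gᶜ (W \ Y) a = Y.card * (W \ Y).card := by
        rw [← smul_eq_mul, ← Finset.sum_const]
        refine Finset.sum_congr rfl fun a ha => ?_
        unfold dg
        congr 1
        ext b
        rw [mem_nb]
        refine ⟨fun h => h.1, fun h => ⟨h, ?_⟩⟩
        rw [Finset.mem_sdiff] at h
        rw [SimpleGraph.compl_adj]
        refine ⟨?_, fun hab => h.2 (hYcl a ha b h.1 hab)⟩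
        rintro rfl
        exact h.2 ha
      have h3 := Finset.card_sdiff_add_card_eq_card hYW
      have h4 := Finset.card_pos.2 hYne
      have h5 : 0 < (W \ Y).card := by
        rw [Finset.card_pos, Finset.sdiff_nonempty]
        exact fun h => hYneW (Finset.Subset.antisymm hYW h)
      have h6 : Y.card + (W \ Y).card ≤ Y.card * (W \ Y).card + 1 := by nlinarith
      omega
    have hw2 : 2 ≤ W.card := by
      have h4 := Finset.card_pos.2 hYne
      have := Finset.card_lt_card (Finset.ssubset_iff_subset_ne.2 ⟨hYW, hYneW⟩)
      omega
    obtain ⟨p, hp, hpmin⟩ := Finset.exists_min_image W (fun q => dg Gᶜ S q) hW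
    have hτ : W.card * dg Gᶜ S p ≤ ∑ q ∈ W, dg Gᶜ S q := by
      simpa using Finset.card_nsmul_le_sum W (fun q => dg Gᶜ S q) _ hpmin
    have hA : ∑ q ∈ W, dg Gᶜ S q + E Gᶜ W + W.card * 6 ≤ W.card * (S.card + W.card) := by
      have := Finset.sum_le_card_nsmul W (fun q => dg Gᶜ S q + dg Gᶜ W q + 6) _ hWd
      simpa [Finset.sum_add_distrib, E] using this
    have hB : ∑ q ∈ W, dg Gᶜ S q + E Gᶜ S + S.card * 6 ≤ S.card * (S.card + W.card) := by
      have := Finset.sum_le_card_nsmul S (fun q => dg Gᶜ S q + dg Gᶜ W q + 6) _ hS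
      rw [sum_dg_comm]
      simp [Finset.sum_add_distrib] at this
      unfold E
      omega
    refine ⟨{p}, by simpa using hp, conn_singleton G p, ?_⟩
    rintro T rfl
    set T := S.filter (fun y => (∀ q ∈ ({p} : Finset V), ¬ G.Adj y q) ∧ 1 ≤ dg Gᶜ S y) with hT
    have hTp : ∀ t ∈ T, t ∈ S ∧ Gᶜ.Adj t p := by
      intro t ht
      rw [hT, Finset.mem_filter] at ht
      exact ⟨ht.1, hCadj t ht.1 p hp (ht.2.1 p (by simp))⟩
    have hcard : T.card ≤ dg Gᶜ S p := by
      apply Finset.card_le_card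
      intro t ht
      exact mem_nb.2 ⟨(hTp t ht).1, (hTp t ht).2.symm⟩
    have hT2 : ∀ t ∈ T, dg Gᶜ S t ≤ 2 := by
      intro t ht
      have h1 : 0 < dg Gᶜ W t := Finset.card_pos.2 ⟨p, mem_nb.2 ⟨hp, (hTp t ht).2⟩⟩
      have := hS t (hTp t ht).1
      omega
    generalize dg Gᶜ S p = τ at *
    generalize ∑ q ∈ W, dg Gᶜ S q = sg at *
    generalize E Gᶜ W = e1 at *
    generalize E Gᶜ S = e2 at *
    generalize T.card = tc at *
    generalize S.card = s at *
    generalize W.card = w at *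
    have hw4 : w ≤ 4 := by omega
    clear_value T
    refine ⟨hT2, fun h6 => ?_, fun h7 => ?_, fun h8 => by omega⟩
    · clear hS hWd
      have : s = 5 ∨ s = 6 := by omega
      rcases this with rfl | rfl <;> interval_cases w <;> omega
    · have : w = 2 := by omega
      subst this
      subst h7
      exact ⟨by omega, by omega, Or.inl (by omega)⟩



lemma sep_case {V : Type*} {G : SimpleGraph V} {A K N S : Finset V} {v : V} (ih : IH V A.card)
    (hM : ¬ Mn G A) (hE : 10 * A.card ≤ E G A + 28) (hdeg : ∀ x ∈ A, 6 ≤ dg G A x)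
    (hv : v ∈ A) (hN : N = nb G A v) (hN9 : N.card ≤ 9)
    (hC : ∀ x ∈ N, dg Gᶜ N x + 6 ≤ N.card)
    (hK : K ⊆ A) (hvK : v ∉ K) (hKN : Disjoint K N) (hKc : Conn G K)
    (hSdef : S = N.filter (fun y => ∃ x ∈ K, G.Adj y x))
    (hcl : ∀ a ∈ K, ∀ b ∈ A, G.Adj a b → b ∈ K ∪ S) (hSN : S ≠ N) : False := by
  have hSsub : S ⊆ N := by rw [hSdef]; exact Finset.filter_subset _ _
  have hNA : N ⊆ A := by rw [hN]; exact Finset.filter_subset _ _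
  have hS : S ⊆ A := hSsub.trans hNA
  have hvN : ∀ y ∈ N, G.Adj v y := fun y hy => by rw [hN] at hy; exact (mem_nb.1 hy).2
  have hvS : v ∉ S := fun h => (hvN v (hSsub h)).ne rfl
  have hd : Disjoint K S := hKN.mono_right hSsub
  have hSK : ∀ y ∈ S, ∃ x ∈ K, G.Adj y x := fun y hy => by
    rw [hSdef, Finset.mem_filter] at hy; exact hy.2
  have hKS6 : 6 ≤ (K ∪ S).card := by
    obtain ⟨a, ha⟩ := hKc.1
    refine (hdeg a (hK ha)).trans (Finset.card_le_card ?_)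
    intro b hb
    rw [mem_nb] at hb
    exact hcl a ha b hb.1 hb.2
  have hAK6 : 6 ≤ (A \ K).card := by
    refine (hdeg v hv).trans (Finset.card_le_card ?_)
    intro b hb
    rw [← hN] at hb
    exact Finset.mem_sdiff.2 ⟨hNA hb, fun h => Finset.disjoint_left.1 hKN h hb⟩
  have hcount := sep_count G hK hS hd hcl
  have hcomp := E_compl G S
  have hc1 := Finset.card_union_of_disjoint hd
  have hc2 := Finset.card_sdiff_add_card_eq_card hK
  have I0 : S.card * S.card + 32 ≤ 11 * S.card + E Gᶜ S := by
    have h1 := ih G (K ∪ S) hKS6 (Finset.card_lt_card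
      ⟨Finset.union_subset hK hS, fun h => by have := h hv; simp [hvK, hvS] at this⟩)
      (fun h => hM (h.mono le_rfl (Finset.union_subset hK hS)))
    have h2 := ih G (A \ K) hAK6 (by have := Finset.card_pos.2 hKc.1; omega)
      (fun h => hM (h.mono le_rfl Finset.sdiff_subset))
    omega
  have I1 : ∀ u' ∈ S, ∀ u ∈ S,
      S.card * S.card + 32 + 2 * dg Gᶜ S u' + 2 * dg Gᶜ S u ≤ 11 * S.card + E Gᶜ S := by
    intro u' hu' u hu
    have h1 := sepA ih hM hK hS hd hKc hSK hAK6 hu'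
    have h2 := sepB1 ih hM hK hS hv hvK hvS (fun y hy => hvN y (hSsub hy)) hKS6 hu
    omega
  have hdW : Disjoint S (N \ S) := Finset.disjoint_sdiff
  have hcN : (N \ S).card + S.card = N.card := Finset.card_sdiff_add_card_eq_card hSsub
  have hdgN : ∀ x, dg Gᶜ N x = dg Gᶜ S x + dg Gᶜ (N \ S) x := by
    intro x
    rw [← dg_union Gᶜ hdW, Finset.union_sdiff_of_subset hSsub]
  have hWne : (N \ S).Nonempty := by
    rw [Finset.sdiff_nonempty]; exact fun h => hSN (Finset.Subset.antisymm hSsub h)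
  have hW1 := Finset.card_pos.2 hWne
  have h5 : 5 ≤ S.card := by
    by_contra hlt
    rcases S.eq_empty_or_nonempty with rfl | hne
    · simp [E] at I0
    · obtain ⟨w, hwS, hw⟩ := Finset.exists_max_image S (fun x => dg Gᶜ S x) hne
      have h1 := I1 w hwS w hwS
      have h2 : E Gᶜ S ≤ S.card * dg Gᶜ S w := sum_dg_le Gᶜ S S _ hw
      have h3 : S.card ≤ 4 := by omega
      generalize S.card = s at *
      interval_cases s <;> omega
  obtain ⟨X, hXW, hXc, hX⟩ := helper G hdW hWne (by omega) h5
    (fun x hx => by have := hC x (hSsub hx); have := hdgN x; omega)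
    (fun x hx => by have := hC x (Finset.mem_sdiff.1 hx).1; have := hdgN x; omega)
  obtain ⟨hT2, h6, h7, h8⟩ := hX _ rfl
  refine comb Gᶜ S _ (Finset.filter_subset _ _) (fun x hx => ?_) I0 I1 ?_ (by omega) ?_
    hT2 h6 h7 h8
  · have := hC x (hSsub hx); have := hdgN x; omega
  · intro u' hu' u hu x hx hxT hxu
    set T := S.filter (fun y => (∀ p ∈ X, ¬ G.Adj y p) ∧ 1 ≤ dg Gᶜ S y) with hT
    have hnbX : ∀ y ∈ S, y ∉ T → 1 ≤ dg Gᶜ S y → ∃ p ∈ X, G.Adj y p := by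
      intro y hy hyT h1
      by_contra hno
      push Not at hno
      exact hyT (by rw [hT, Finset.mem_filter]; exact ⟨hy, hno, h1⟩)
    rcases Nat.eq_zero_or_pos (dg Gᶜ S x) with h0 | h0
    · have h1 := I1 u' hu' u hu
      have h2 := dg_mono (le_refl Gᶜ) (Finset.sdiff_subset (s := S) (t := insert u T)) x
      omega
    · have h1 := sepA ih hM hK hS hd hKc hSK hAK6 hu'
      have h2 := sepB2 (X := X) (F := nb Gᶜ (S \ insert u T) x) ih hM hK hS hv hvK hvS
        (fun y hy => hvN y (hSsub hy)) hKS6 hu hx hxu hXc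
        (fun p hp => hNA (Finset.mem_sdiff.1 (hXW hp)).1) (by
          rw [Finset.disjoint_right]
          intro p hp hp2
          have hp3 := Finset.mem_sdiff.1 (hXW hp)
          rcases Finset.mem_union.1 hp2 with h | h
          · exact Finset.disjoint_left.1 hKN h hp3.1
          · exact hp3.2 h)
        (fun h => (hvN v (Finset.mem_sdiff.1 (hXW h)).1).ne rfl)
        (hnbX x hx hxT h0)
        (fun y hy => (Finset.mem_sdiff.1 (mem_nb.1 hy).1).1)
        (fun h => by have := (mem_nb.1 h).1; simp at this)
        (fun y hy => (mem_nb.1 hy).2)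
        (fun y hy => by
          rw [mem_nb, Finset.mem_sdiff, Finset.mem_insert, not_or] at hy
          exact hnbX y hy.1.1 hy.1.2.2
            (Finset.card_pos.2 ⟨x, mem_nb.2 ⟨hx, hy.2.symm⟩⟩))
      unfold dg at *
      omega
  · intro t ht
    exact (Finset.mem_filter.1 ht).2.2



lemma full_comb {V : Type*} (C : SimpleGraph V) (N : Finset V) (D : ℕ)
    (hD : D = 2 ∨ D = 3) (hd : N.card = D + 6) (hle : ∀ x ∈ N, dg C N x ≤ D)
    (hE : N.card * D ≤ E C N + 1)
    (h : ∀ u ∈ N, ∀ a ∈ N, ∀ b ∈ N, dg C N u = D → u ≠ a → u ≠ b → a ≠ b → ¬ C.Adj a b →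
      2 ≤ (N \ ({u, a, b} ∪ nb C N a ∪ nb C N b)).card) : False := by
  have hdef : ∀ Y ⊆ N, Y.card * D ≤ ∑ x ∈ Y, dg C N x + 1 := by
    intro Y hY
    have h1 : E C N = ∑ x ∈ N \ Y, dg C N x + ∑ x ∈ Y, dg C N x := (Finset.sum_sdiff hY).symm
    have h2 := sum_dg_le C (N \ Y) N D (fun x hx => hle x (Finset.mem_sdiff.1 hx).1)
    have h3 := Finset.card_sdiff_add_card_eq_card hY
    rw [← h3] at hE
    nlinarith
  have hex : ∀ Y ⊆ N, 2 ≤ Y.card → ∃ u ∈ Y, dg C N u = D := by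
    intro Y hY h2
    by_contra hno
    push Not at hno
    have h3 := sum_dg_le C Y N (D - 1) (fun x hx => by
      have := hle x (hY hx); have := hno x hx; omega)
    have h4 := hdef Y hY
    rcases hD with rfl | rfl <;> omega
  obtain ⟨a, haN, ha⟩ := hex N le_rfl (by omega)
  set P := nb C N a with hP
  have hPN : P ⊆ N := Finset.filter_subset _ _
  have hPc : P.card = D := ha
  have haP : a ∉ P := by rw [hP, mem_nb]; exact fun h => h.2.ne rfl
  have hins : insert a P ⊆ N := Finset.insert_subset haN hPN
  have hMc := Finset.card_sdiff_add_card_eq_card hins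
  rw [Finset.card_insert_of_notMem haP] at hMc
  set M := N \ insert a P with hM
  have hMN : M ⊆ N := Finset.sdiff_subset
  have hbex : ∃ b ∈ M, D + 2 ≤ (P ∪ nb C N b).card := by
    by_contra hno
    push Not at hno
    have h1 : ∀ b ∈ M, dg C N b ≤ dg C P b + 1 := by
      intro b hb
      have h1 := hno b hb
      have h2 := Finset.card_union_add_card_inter P (nb C N b)
      have h3 : P ∩ nb C N b = nb C P b := by
        ext y; simp only [Finset.mem_inter, mem_nb]
        exact ⟨fun h => ⟨h.1, h.2.2⟩, fun h => ⟨h.1, hPN h.1, h.2⟩⟩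
      rw [h3] at h2
      unfold dg
      omega
    have h2 : ∑ b ∈ M, dg C N b ≤ ∑ b ∈ M, dg C P b + M.card := by
      have := Finset.sum_le_sum h1
      simpa [Finset.sum_add_distrib] using this
    have h3 : ∑ b ∈ M, dg C P b ≤ P.card * (D - 1) := by
      rw [sum_dg_comm]
      refine sum_dg_le C P M (D - 1) fun c hc => ?_
      have h4 : dg C M c + 1 ≤ dg C N c := by
        have h5 := dg_insert C (X := M) (x := a) (by simp [hM]) c
        have h6 : C.Adj c a := (mem_nb.1 hc).2.symm
        rw [if_pos h6] at h5
        rw [← h5]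
        exact dg_mono le_rfl (Finset.insert_subset haN hMN) c
      have := hle c (hPN hc)
      omega
    have h4 := hdef M hMN
    have h5 : M.card = 5 := by omega
    rw [h5] at h2 h4
    rw [hPc] at h3
    rcases hD with rfl | rfl <;> omega
  obtain ⟨b, hbM, hb⟩ := hbex
  have hbM2 := hbM
  rw [hM, Finset.mem_sdiff, Finset.mem_insert, not_or] at hbM2
  obtain ⟨hbN, hba, hbP⟩ := hbM2
  have hnab : ¬ C.Adj a b := fun hh => hbP (mem_nb.2 ⟨hbN, hh⟩)
  set U := insert a (insert b (P ∪ nb C N b)) with hU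
  have hUN : U ⊆ N := Finset.insert_subset haN (Finset.insert_subset hbN
    (Finset.union_subset hPN (Finset.filter_subset _ _)))
  have hUc : U.card = (P ∪ nb C N b).card + 2 := by
    rw [hU, Finset.card_insert_of_notMem, Finset.card_insert_of_notMem]
    · rw [Finset.mem_union, not_or]
      exact ⟨hbP, fun hh => (mem_nb.1 hh).2.ne rfl⟩
    · rw [Finset.mem_insert, Finset.mem_union, not_or, not_or]
      exact ⟨fun hh => hba hh.symm, haP, fun hh => hnab (mem_nb.1 hh).2.symm⟩
  have hOc := Finset.card_sdiff_add_card_eq_card hUN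
  by_cases hu : ∃ u ∈ N \ U, dg C N u = D
  · obtain ⟨u, huO, hud⟩ := hu
    have huO2 := huO
    rw [hU, Finset.mem_sdiff, Finset.mem_insert, Finset.mem_insert, not_or, not_or] at huO2
    have h1 := h u huO2.1 a haN b hbN hud huO2.2.1 huO2.2.2.1 (fun hh => hba hh.symm) hnab
    have h2 : (N \ ({u, a, b} ∪ nb C N a ∪ nb C N b)) ⊆ (N \ U).erase u := by
      intro y hy
      simp only [hU, hP, Finset.mem_erase, Finset.mem_sdiff, Finset.mem_union, Finset.mem_insert,
        Finset.mem_singleton] at hy ⊢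
      tauto
    have h3 := Finset.card_le_card h2
    rw [Finset.card_erase_of_mem huO] at h3
    omega
  · have hO1 : (N \ U).card ≤ 1 := by
      by_contra hlt
      exact hu (hex (N \ U) Finset.sdiff_subset (by omega))
    obtain ⟨u, huP, hud⟩ := hex P hPN (by omega)
    have h1 := h u (hPN huP) a haN b hbN hud (fun hh => haP (hh ▸ huP))
      (fun hh => hbP (hh ▸ huP)) (fun hh => hba hh.symm) hnab
    have h2 : (N \ ({u, a, b} ∪ nb C N a ∪ nb C N b)) ⊆ (N \ U) := by
      intro y hy
      simp only [hU, hP, Finset.mem_sdiff, Finset.mem_union, Finset.mem_insert,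
        Finset.mem_singleton] at hy ⊢
      tauto
    have h3 := Finset.card_le_card h2
    omega

lemma full_case {V : Type*} {G : SimpleGraph V} {A K N : Finset V} {v : V} (ih : IH V A.card)
    (hM : ¬ Mn G A) (hv : v ∈ A) (hN : N = nb G A v) (hN6 : 6 ≤ N.card) (hN9 : N.card ≤ 9)
    (hC : ∀ x ∈ N, dg Gᶜ N x + 6 ≤ N.card)
    (hK : K ⊆ A) (hvK : v ∉ K) (hKN : Disjoint K N) (hKc : Conn G K)
    (hNK : ∀ y ∈ N, ∃ x ∈ K, G.Adj y x) : False := by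
  have hNA : N ⊆ A := by rw [hN]; exact Finset.filter_subset _ _
  have hvN : ∀ y ∈ N, G.Adj v y := fun y hy => by rw [hN] at hy; exact (mem_nb.1 hy).2
  have hvnN : v ∉ N := fun h => (hvN v h).ne rfl
  have hdisj : Disjoint (insert v N) K := by
    rw [Finset.disjoint_insert_left]; exact ⟨hvK, hKN.symm⟩
  have hsub : insert v N ⊆ A := Finset.insert_subset hv hNA
  have hcard : (insert v N).card = N.card + 1 := Finset.card_insert_of_notMem hvnN
  have hlt : N.card + 1 < A.card := by
    have h1 := Finset.card_le_card (Finset.union_subset hsub hK)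
    rw [Finset.card_union_of_disjoint hdisj, hcard] at h1
    have := Finset.card_pos.2 hKc.1
    omega
  have hnoM : ∀ u ∈ N, ¬ Mn (fill G u N) (insert v N) := fun u hu h =>
    hM ((Mn.of_fill hKc hdisj (hNK u hu) hNK h).mono le_rfl (Finset.union_subset hsub hK))
  have hEv : E G (insert v N) = E G N + 2 * N.card := by
    rw [E_insert G hvnN]
    congr 2
    unfold dg
    congr 1
    ext y
    rw [mem_nb]
    exact ⟨fun h => h.1, fun h => ⟨h, hvN y h⟩⟩
  have hcomp := E_compl G N
  have hEf : ∀ u ∈ N, E G (insert v N) + 2 * dg Gᶜ N u ≤ E (fill G u N) (insert v N) := by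
    intro u hu
    exact E_fill G (F := nb Gᶜ N u) (Finset.mem_insert_of_mem hu)
      (fun y hy => Finset.mem_insert_of_mem (mem_nb.1 hy).1)
      (fun y hy => (mem_nb.1 hy).1) (fun y hy => (mem_nb.1 hy).2)
  have h1 : ∀ u ∈ N, N.card * N.card + 20 + 2 * dg Gᶜ N u ≤ 9 * N.card + E Gᶜ N := by
    intro u hu
    have h1 := ih (fill G u N) (insert v N) (by omega) (by omega) (hnoM u hu)
    have h2 := hEf u hu
    omega
  obtain ⟨w, hwN, hw⟩ := Finset.exists_max_image N (fun x => dg Gᶜ N x)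
    (Finset.card_pos.1 (by omega))
  have h2 := h1 w hwN
  have h3 := hC w hwN
  have h4 : E Gᶜ N ≤ N.card * dg Gᶜ N w := sum_dg_le Gᶜ N N _ hw
  obtain ⟨e, he⟩ := E_even Gᶜ N
  obtain ⟨D, hD, hd, hDE⟩ : ∃ D, (D = 2 ∨ D = 3) ∧ N.card = D + 6 ∧
      N.card * D ≤ E Gᶜ N + 1 ∧ (N.card * N.card + 20 + 2 * D ≤ 9 * N.card + E Gᶜ N ∧
      E Gᶜ N + 9 * N.card ≤ N.card * N.card + 20 + 2 * D) := by
    clear hEf h1 hw hnoM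
    refine ⟨N.card - 6, ?_⟩
    generalize N.card = n at *
    generalize dg Gᶜ N w = δ at *
    have : δ ≤ 3 := by omega
    interval_cases n <;> interval_cases δ <;> omega
  refine full_comb Gᶜ N D hD hd (fun x hx => by have := hC x hx; omega) hDE.1 ?_
  intro u hu a ha b hb hud hua hub hab hnab
  have hGab : G.Adj a b := by
    by_contra hh
    exact hnab (by rw [SimpleGraph.compl_adj]; exact ⟨hab, hh⟩)
  have hle := le_fill G u N
  have hbA : b ∈ insert v N := Finset.mem_insert_of_mem hb
  have h5 := E_contract (fill G u N) (X := insert v N) (Finset.mem_insert_of_mem ha) hbA (hle hGab)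
  have h6 := ih (fill (fill G u N) a (nb (fill G u N) (insert v N) b)) ((insert v N).erase b)
    (by rw [Finset.card_erase_of_mem hbA]; omega) (by rw [Finset.card_erase_of_mem hbA]; omega)
    (fun hh => hnoM u hu (Mn.of_contract hbA (hle hGab) hh))
  rw [Finset.card_erase_of_mem hbA, hcard] at h6
  have h7 := hEf u hu
  have h8 : ((insert v N).filter
      (fun y => (fill G u N).Adj a y ∧ (fill G u N).Adj b y)) ⊆
      insert v (insert u (N \ ({u, a, b} ∪ nb Gᶜ N a ∪ nb Gᶜ N b))) := by
    intro y hy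
    rw [Finset.mem_filter, fill_adj, fill_adj, Finset.mem_insert] at hy
    simp only [Finset.mem_insert, Finset.mem_sdiff, Finset.mem_union, Finset.mem_singleton,
      mem_nb, SimpleGraph.compl_adj]
    by_cases hyv : y = v
    · left; exact hyv
    · right
      by_cases hyu : y = u
      · left; exact hyu
      · right
        have hyN := hy.1.resolve_left hyv
        have e1 : G.Adj a y := by
          rcases hy.2.1 with e | ⟨_, ⟨e, _⟩ | ⟨e, _⟩⟩
          · exact e
          · exact absurd e.symm hua
          · exact absurd e hyu
        have e2 : G.Adj b y := by
          rcases hy.2.2 with e | ⟨_, ⟨e, _⟩ | ⟨e, _⟩⟩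
          · exact e
          · exact absurd e.symm hub
          · exact absurd e hyu
        have e3 := e1.ne'
        have e4 := e2.ne'
        tauto
  have h9 := Finset.card_le_card h8
  have h10 := Finset.card_insert_le v (insert u (N \ ({u, a, b} ∪ nb Gᶜ N a ∪ nb Gᶜ N b)))
  have h11 := Finset.card_insert_le u (N \ ({u, a, b} ∪ nb Gᶜ N a ∪ nb Gᶜ N b))
  rw [hd] at hcomp hDE h6 hEv
  rcases hD with rfl | rfl <;> omega



lemma E_delete {V : Type*} (G : SimpleGraph V) {A : Finset V} {a b : V} (ha : a ∈ A) (hb : b ∈ A)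
    (hab : G.Adj a b) : E G A = E (G.deleteEdges {s(a, b)}) A + 2 := by
  set H := G.deleteEdges {s(a, b)} with hH
  have h1 := E_erase G ha
  have h2 := E_erase H ha
  have h3 : E G (A.erase a) = E H (A.erase a) := by
    unfold E
    refine Finset.sum_congr rfl fun x hx => ?_
    unfold dg
    congr 1
    ext y
    simp only [mem_nb, hH, SimpleGraph.deleteEdges_adj, Finset.mem_erase] at hx ⊢
    constructor
    · rintro ⟨h4, h5⟩
      refine ⟨h4, h5, ?_⟩
      rw [Set.mem_singleton_iff, Sym2.eq_iff]
      rintro (⟨rfl, _⟩ | ⟨_, rfl⟩)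
      · exact hx.1 rfl
      · exact h4.1 rfl
    · rintro ⟨h4, h5⟩; exact ⟨h4, h5.1⟩
  have h4 : nb H A a = (nb G A a).erase b := by
    ext y
    simp only [mem_nb, hH, SimpleGraph.deleteEdges_adj, Finset.mem_erase,
      Set.mem_singleton_iff, Sym2.eq_iff]
    constructor
    · rintro ⟨h5, h6, h7⟩
      exact ⟨fun h => h7 (Or.inl ⟨trivial, h⟩), h5, h6⟩
    · rintro ⟨h5, h6, h7⟩
      refine ⟨h6, h7, ?_⟩
      rintro (⟨_, rfl⟩ | ⟨rfl, rfl⟩)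
      · exact h5 rfl
      · exact h5 rfl
  have hbm : b ∈ nb G A a := mem_nb.2 ⟨hb, hab⟩
  have h5 : dg G A a = dg H A a + 1 := by
    unfold dg
    rw [h4, Finset.card_erase_of_mem hbm]
    have := Finset.card_pos.2 ⟨b, hbm⟩
    omega
  omega

/-- existence of a component of `R` -/
lemma exists_comp {V : Type*} (G : SimpleGraph V) {R : Finset V} (hR : R.Nonempty) :
    ∃ K ⊆ R, Conn G K ∧ ∀ a ∈ K, ∀ b ∈ R, G.Adj a b → b ∈ K := by
  obtain ⟨K, hK, hmin⟩ := Finset.exists_min_image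
    (R.powerset.filter (fun K => K.Nonempty ∧ ∀ a ∈ K, ∀ b ∈ R, G.Adj a b → b ∈ K))
    Finset.card ⟨R, by simpa using ⟨hR, fun a _ b hb _ => hb⟩⟩
  rw [Finset.mem_filter, Finset.mem_powerset] at hK
  obtain ⟨hKR, hKne, hKcl⟩ := hK
  refine ⟨K, hKR, ⟨hKne, fun Y hY hne hcl => ?_⟩, hKcl⟩
  refine Finset.eq_of_subset_of_card_le hY (hmin Y ?_)
  rw [Finset.mem_filter, Finset.mem_powerset]
  exact ⟨hY.trans hKR, hne, fun a ha b hb hab =>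
    hcl a ha b (hKcl a (hY ha) b hb hab) hab⟩

lemma step {V : Type*} {G : SimpleGraph V} {A : Finset V} (ih : IH V A.card)
    (hA6 : 6 ≤ A.card) (hE : 10 * A.card ≤ E G A + 28) (hE2 : E G A + 28 ≤ 10 * A.card + 1)
    (hM : ¬ Mn G A) : False := by
  have hA7 : 7 ≤ A.card := by
    by_contra hlt
    have h6 : A.card = 6 := by omega
    have := E_compl G A
    rw [h6] at this hE
    omega
  have hdeg : ∀ x ∈ A, 6 ≤ dg G A x := by
    intro x hx
    have h1 := E_erase G hx
    have hc := Finset.card_erase_of_mem hx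
    have h2 := ih G (A.erase x) (by omega) (by omega)
      (fun h => hM (h.mono le_rfl (Finset.erase_subset _ _)))
    omega
  have hedge : ∀ a ∈ A, ∀ b ∈ A, G.Adj a b →
      5 ≤ (A.filter (fun y => G.Adj a y ∧ G.Adj b y)).card := by
    intro a ha b hb hab
    have h1 := E_contract G ha hb hab
    have hc := Finset.card_erase_of_mem hb
    have h2 := ih _ (A.erase b) (by omega) (by omega) (fun h => hM (Mn.of_contract hb hab h))
    omega
  obtain ⟨v, hv, hv9, hvk⟩ : ∃ v ∈ A, dg G A v ≤ 9 ∧ dg G A v + 1 < A.card := by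
    by_cases h11 : 11 ≤ A.card
    · have : ∃ v ∈ A, dg G A v ≤ 9 := by
        by_contra hno
        push Not at hno
        have h1 := Finset.card_nsmul_le_sum A (fun x => dg G A x) 10 (fun x hx => hno x hx)
        have h2 : A.card * 10 ≤ E G A := by simpa [E] using h1
        omega
      obtain ⟨v, hv, hv9⟩ := this
      exact ⟨v, hv, hv9, by omega⟩
    · have : ∃ a ∈ A, ∃ b ∈ A, a ≠ b ∧ ¬ G.Adj a b := by
        by_contra hno
        push Not at hno
        exact hM (Mn.of_clique hA7 hno)
      obtain ⟨a, ha, b, hb, hab, hn⟩ := this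
      have h1 : dg G A a ≤ ((A.erase a).erase b).card := by
        apply Finset.card_le_card
        intro y hy
        rw [mem_nb] at hy
        rw [Finset.mem_erase, Finset.mem_erase]
        exact ⟨fun h => hn (h ▸ hy.2), hy.2.ne', hy.1⟩
      rw [Finset.card_erase_of_mem (Finset.mem_erase.2 ⟨hab.symm, hb⟩),
        Finset.card_erase_of_mem ha] at h1
      exact ⟨a, ha, by omega, by omega⟩
  obtain ⟨N, hN⟩ : ∃ N, N = nb G A v := ⟨_, rfl⟩
  have hNc : N.card = dg G A v := by rw [hN]; rfl
  have hNA : N ⊆ A := by rw [hN]; exact Finset.filter_subset _ _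
  have hvN : v ∉ N := by rw [hN, mem_nb]; exact fun h => h.2.ne rfl
  have hC : ∀ x ∈ N, dg Gᶜ N x + 6 ≤ N.card := by
    intro x hx
    have h1 := dg_compl G hx
    have hx2 := hx
    rw [hN, mem_nb] at hx2
    have h2 := hedge v hv x hx2.1 hx2.2
    have h3 : A.filter (fun y => G.Adj v y ∧ G.Adj x y) = nb G N x := by
      ext y
      rw [Finset.mem_filter, mem_nb, hN, mem_nb]
      tauto
    rw [h3] at h2
    unfold dg at *
    omega
  have hRne : (A \ insert v N).Nonempty := by
    rw [Finset.sdiff_nonempty]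
    intro h
    have := Finset.card_le_card h
    rw [Finset.card_insert_of_notMem hvN] at this
    omega
  obtain ⟨K, hKR, hKc, hKcl⟩ := exists_comp G hRne
  have hKmem : ∀ a ∈ K, a ∈ A ∧ a ≠ v ∧ a ∉ N := by
    intro a ha
    have := hKR ha
    rw [Finset.mem_sdiff, Finset.mem_insert, not_or] at this
    exact this
  have hKA : K ⊆ A := fun a ha => (hKmem a ha).1
  have hvK : v ∉ K := fun h => (hKmem v h).2.1 rfl
  have hKN : Disjoint K N := Finset.disjoint_left.2 fun a ha => (hKmem a ha).2.2
  obtain ⟨S, hS⟩ : ∃ S, S = N.filter (fun y => ∃ x ∈ K, G.Adj y x) := ⟨_, rfl⟩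
  by_cases hSN : S = N
  · refine full_case ih hM hv hN (by have := hdeg v hv; omega) (by omega) hC hKA hvK hKN hKc ?_
    intro y hy
    rw [← hSN, hS, Finset.mem_filter] at hy
    exact hy.2
  · refine sep_case ih hM hE hdeg hv hN (by omega) hC hKA hvK hKN hKc hS ?_ hSN
    intro a ha b hb hab
    rw [Finset.mem_union]
    by_cases hbN : b ∈ N
    · right
      rw [hS, Finset.mem_filter]
      exact ⟨hbN, a, ha, hab.symm⟩
    · left
      refine hKcl a ha b ?_ hab
      rw [Finset.mem_sdiff, Finset.mem_insert, not_or]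
      refine ⟨hb, ?_, hbN⟩
      rintro rfl
      exact (hKmem a ha).2.2 (by rw [hN, mem_nb]; exact ⟨hKA ha, hab.symm⟩)

lemma inner {V : Type*} {A : Finset V} (ih : IH V A.card) (hA6 : 6 ≤ A.card) (m : ℕ) :
    ∀ G : SimpleGraph V, E G A = m → 10 * A.card ≤ E G A + 28 → Mn G A := by
  induction m using Nat.strong_induction_on with
  | _ m IHm =>
    intro G hm hE
    by_contra hM
    by_cases h2 : E G A + 28 ≤ 10 * A.card + 1
    · exact step ih hA6 hE h2 hM
    · have : ∃ a ∈ A, ∃ b ∈ A, G.Adj a b := by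
        by_contra hno
        push Not at hno
        have : E G A = 0 := by
          unfold E
          refine Finset.sum_eq_zero fun a ha => ?_
          unfold dg
          rw [Finset.card_eq_zero, Finset.eq_empty_iff_forall_notMem]
          intro b hb
          rw [mem_nb] at hb
          exact hno a ha b hb.1 hb.2
        omega
      obtain ⟨a, ha, b, hb, hab⟩ := this
      have h3 := E_delete G ha hb hab
      exact hM ((IHm (E (G.deleteEdges {s(a, b)}) A) (by omega) _ rfl (by omega)).mono
        (SimpleGraph.deleteEdges_le _) le_rfl)

lemma ih_all (V : Type*) (k : ℕ) : IH V k := by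
  induction k with
  | zero => intro G A _ h; omega
  | succ k ihk =>
    intro G A h6 hlt hM
    by_cases hk : A.card < k
    · exact ihk G A h6 hk hM
    · have hAk : A.card = k := by omega
      by_contra hE
      obtain ⟨e, he⟩ := E_even G A
      exact hM (inner (hAk ▸ ihk) h6 _ G rfl (by omega))

lemma P7 {V : Type*} (G : SimpleGraph V) (A : Finset V) (h6 : 6 ≤ A.card) (hM : ¬ Mn G A) :
    E G A + 30 ≤ 10 * A.card := ih_all V (A.card + 1) G A h6 (by omega) hM



/-- join with a complete graph on `c` vertices -/
def apex {V : Type*} (G : SimpleGraph V) (c : ℕ) : SimpleGraph (V ⊕ Fin c) where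
  Adj x y := x ≠ y ∧ ∀ a b, x = Sum.inl a → y = Sum.inl b → G.Adj a b
  symm := ⟨fun x y h => ⟨h.1.symm, fun a b ha hb => (h.2 b a hb ha).symm⟩⟩
  loopless := ⟨fun x h => h.1 rfl⟩

lemma apex_inl {V : Type*} {G : SimpleGraph V} {c : ℕ} {a b : V} :
    (apex G c).Adj (Sum.inl a) (Sum.inl b) ↔ G.Adj a b := by
  constructor
  · intro h; exact h.2 a b rfl rfl
  · intro h
    refine ⟨fun h2 => h.ne (Sum.inl_injective h2), ?_⟩
    intro a' b' ha hb
    rw [← Sum.inl_injective ha, ← Sum.inl_injective hb]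
    exact h

lemma apex_E {V : Type*} [Fintype V] (G : SimpleGraph V) (c : ℕ) :
    E (apex G c)ᶜ Finset.univ ≤ E Gᶜ Finset.univ := by
  unfold E
  rw [Fintype.sum_sum_type]
  have h2 : ∑ x : Fin c, dg (apex G c)ᶜ Finset.univ (Sum.inr x) = 0 := by
    refine Finset.sum_eq_zero fun x _ => ?_
    unfold dg
    rw [Finset.card_eq_zero, Finset.eq_empty_iff_forall_notMem]
    intro b hb
    rw [mem_nb, SimpleGraph.compl_adj] at hb
    exact hb.2.2 ⟨hb.2.1, fun a b h => by cases h⟩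
  rw [h2, add_zero]
  refine Finset.sum_le_sum fun a _ => ?_
  unfold dg
  rw [← Finset.card_map (Function.Embedding.inl (α := V) (β := Fin c))]
  apply Finset.card_le_card
  intro b hb
  rw [mem_nb, SimpleGraph.compl_adj] at hb
  rcases b with b | b
  · rw [Finset.mem_map]
    refine ⟨b, mem_nb.2 ⟨Finset.mem_univ _, ?_⟩, rfl⟩
    rw [SimpleGraph.compl_adj]
    exact ⟨fun h => hb.2.1 (by rw [h]), fun h => hb.2.2 (apex_inl.2 h)⟩
  · exact absurd ⟨hb.2.1, fun a b _ h => by cases h⟩ hb.2.2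

lemma apex_minor {V : Type*} [Fintype V] (G : SimpleGraph V) (c t : ℕ) (hct : c + t = 7)
    (hM : Mn (apex G c) Finset.univ) : G.HasCompleteMinor t := by
  obtain ⟨B, -, h2, h3, h4⟩ := hM
  have hbad : (Finset.univ.filter (fun i => ∃ x : Fin c, Sum.inr x ∈ B i)).card ≤ c := by
    have : ∀ i : Fin 7, ∃ g : Fin c → Prop, ∀ x, g x ↔ Sum.inr x ∈ B i := fun i => ⟨_, fun x => Iff.rfl⟩
    rcases Nat.eq_zero_or_pos c with rfl | hc
    · rw [Nat.le_zero, Finset.card_eq_zero, Finset.eq_empty_iff_forall_notMem]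
      intro i hi
      obtain ⟨x, _⟩ := (Finset.mem_filter.1 hi).2
      exact x.elim0
    · have hch : ∀ i : Fin 7, ∃ x : Fin c, (∃ x : Fin c, Sum.inr x ∈ B i) → Sum.inr x ∈ B i := by
        intro i
        by_cases h : ∃ x : Fin c, Sum.inr x ∈ B i
        · obtain ⟨x, hx⟩ := h; exact ⟨x, fun _ => hx⟩
        · exact ⟨⟨0, hc⟩, fun h' => absurd h' h⟩
      choose f hf using hch
      have := Finset.card_le_card_of_injOn f
        (s := Finset.univ.filter (fun i => ∃ x : Fin c, Sum.inr x ∈ B i))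
        (t := Finset.univ) (fun _ _ => Finset.mem_coe.2 (Finset.mem_univ _)) (by
          intro i hi j hj hij
          have hi2 := hf i (Finset.mem_filter.1 hi).2
          have hj2 := hf j (Finset.mem_filter.1 hj).2
          by_contra hne
          rw [hij] at hi2
          exact Finset.disjoint_left.1 (h3 i j hne) hi2 hj2)
      simpa using this
  have hgood : t ≤ (Finset.univ.filter (fun i => ¬ ∃ x : Fin c, Sum.inr x ∈ B i)).card := by
    have := Finset.card_filter_add_card_filter_not (s := (Finset.univ : Finset (Fin 7)))
      (fun i => ∃ x : Fin c, Sum.inr x ∈ B i)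
    simp only [Finset.card_univ, Fintype.card_fin] at this
    omega
  obtain ⟨I, hI, hIc⟩ := Finset.exists_subset_card_eq hgood
  let e := I.equivFinOfCardEq hIc
  let f : Fin t → Fin 7 := fun j => (e.symm j : Fin 7)
  have hfinj : ∀ i j, i ≠ j → f i ≠ f j := fun i j hij h =>
    hij (e.symm.injective (Subtype.ext h))
  have hfin : ∀ j, ∀ z ∈ B (f j), ∃ a, z = Sum.inl a := by
    intro j z hz
    rcases z with a | x
    · exact ⟨a, rfl⟩
    · exact absurd ⟨x, hz⟩ (Finset.mem_filter.1 (hI (e.symm j).2)).2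
  refine ⟨fun j => {a | Sum.inl a ∈ B (f j)}, fun j => ?_, fun j => ?_, fun i j hij => ?_,
    fun i j hij => ?_⟩
  · obtain ⟨z, hz⟩ := (h2 (f j)).1
    obtain ⟨a, rfl⟩ := hfin j z hz
    exact ⟨a, hz⟩
  · rw [SimpleGraph.connected_iff]
    constructor
    · intro x y
      have hY := (h2 (f j)).2 ((B (f j)).filter (fun z => ∃ (a : V)
        (h : a ∈ {a | (Sum.inl a : V ⊕ Fin c) ∈ B (f j)}), z = Sum.inl a ∧
          (G.induce {a | (Sum.inl a : V ⊕ Fin c) ∈ B (f j)}).Reachable x ⟨a, h⟩))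
        (Finset.filter_subset _ _)
        ⟨Sum.inl x.1, Finset.mem_filter.2 ⟨x.2, x.1, x.2, rfl, SimpleGraph.Reachable.refl _⟩⟩ (by
          intro p hp q hq hpq
          obtain ⟨hp1, a, ha, rfl, hr⟩ := Finset.mem_filter.1 hp
          obtain ⟨b, rfl⟩ := hfin j q hq
          refine Finset.mem_filter.2 ⟨hq, b, hq, rfl, hr.trans ?_⟩
          apply SimpleGraph.Adj.reachable
          rw [SimpleGraph.induce_adj]
          exact apex_inl.1 hpq)
      have hy : (Sum.inl y.1 : V ⊕ Fin c) ∈ B (f j) := y.2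
      rw [← hY] at hy
      obtain ⟨_, a, ha, hya, hr⟩ := Finset.mem_filter.1 hy
      have hya2 := Sum.inl_injective hya
      have : y = ⟨a, ha⟩ := Subtype.ext hya2
      rw [this]
      exact hr
    · obtain ⟨z, hz⟩ := (h2 (f j)).1
      obtain ⟨a, rfl⟩ := hfin j z hz
      exact ⟨⟨a, hz⟩⟩
  · rw [Set.disjoint_left]
    intro a ha hb
    exact Finset.disjoint_left.1 (h3 _ _ (hfinj i j hij)) ha hb
  · obtain ⟨p, hp, q, hq, hpq⟩ := h4 _ _ (hfinj i j hij)
    obtain ⟨a, rfl⟩ := hfin i p hp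
    obtain ⟨b, rfl⟩ := hfin j q hq
    exact ⟨a, hp, b, hq, apex_inl.1 hpq⟩

lemma E_univ {V : Type*} [Fintype V] (G : SimpleGraph V) :
    E G Finset.univ = 2 * G.edgeFinset.card := by
  rw [← SimpleGraph.sum_degrees_eq_twice_card_edges]
  unfold E
  refine Finset.sum_congr rfl fun a _ => ?_
  rw [← SimpleGraph.card_neighborFinset_eq_degree]
  unfold dg
  congr 1
  ext b
  simp [mem_nb]


end MaderK7


theorem mader_edge_bound {V : Type*} [Fintype V] (G : SimpleGraph V) (t : ℕ)
    (ht2 : 2 ≤ t) (ht7 : t ≤ 7) (hn : t - 1 ≤ Fintype.card V)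
    (hminor : ¬ G.HasCompleteMinor t) :
    (G.edgeFinset.card : ℤ) ≤ ((t : ℤ) - 2) * (Fintype.card V : ℤ) - (Nat.choose (t - 1) 2 : ℤ) := by
  obtain ⟨c, hc⟩ : ∃ c, c + t = 7 := ⟨7 - t, by omega⟩
  have hM : ¬ MaderK7.Mn (MaderK7.apex G c) Finset.univ := fun h =>
    hminor (MaderK7.apex_minor G c t hc h)
  have hcard : (Finset.univ : Finset (V ⊕ Fin c)).card = Fintype.card V + c := by simp
  have h1 := MaderK7.P7 (MaderK7.apex G c) Finset.univ (by rw [hcard]; omega) hM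
  have h2 := MaderK7.E_compl (MaderK7.apex G c) Finset.univ
  have h3 := MaderK7.E_compl G Finset.univ
  have h4 := MaderK7.apex_E G c
  have h5 := MaderK7.E_univ G
  rw [hcard] at h1 h2
  rw [Finset.card_univ] at h3
  generalize Fintype.card V = n at *
  generalize G.edgeFinset.card = m at *
  zify at h1 h2 h3 h4 h5
  have ht : t = 7 - c := by omega
  have hc5 : c ≤ 5 := by omega
  subst ht
  interval_cases c <;> norm_num [Nat.choose] at * <;> nlinarith
end
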